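/- For every T > 1 there exists a constant C(T) > 0 such that for every R > 1 and every x ∈ ℝⁿ, the Lebesgue measure of the transition region satisfies H^n(B_R(x) ∩ {u ≤ T, v ≤ T}) ≤ C(T) R^{n−1}. -/

import Mathlib

/-!
Write `a(x, r) = ∫ (u² + v²)(x + r y) ω(y)² dy` with the weight `ω = (1 - |y|²)₊`. The argument
plays an upper bound for the Laplacian mass of a subharmonic function against a lower bound near
each point of the transition region `{u ≤ T, v ≤ T}`.

*Doubling.* A Pohozaev identity (`pohozaev_single`) gives monotonicity of Almgren's frequency
(`IsSol.freq_mono`); linear growth bounds it by the value belonging to homogeneity one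
(`IsSol.freq_le`). Since the monotonicity formula also controls the term `∫ u² v²` by the
derivative of the frequency, `a(x, r) / r²` is nonincreasing in `r` up to a factor `e`, uniformly
in `x` (`IsSol.doubling`).

*Transition points.* If `u, v ≤ T` at `x`, then `a(x, 1) ≤ Q(T)` (`IsSol.transition_upper`): at the
scale `r` with `r² a(x, r) = 1` the zeroth order coefficients `v²`, `u²` are of size `r⁻²`, so
averages of `u` and `v` over `B_r(x)` are bounded by a multiple of `T`. By doubling,
`u + v ≤ C(T) r` on `B_r(x)` for all `r ≥ 1`.

*Lower bound.* There is no positive solution of sublinear growth (`liouville`). This is a two-point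
maximum principle: maximise `log u(x) + log v(y) - 2 log ψ(|x - y|)` minus a small localising
term. At a maximum off the diagonal, moving `y` by the mirror image of the motion of `x` produces
`v(x)² + u(y)² ≤ 0` up to small terms; on the diagonal it gives `u² + v² ≲ ψ(0)⁻²`, which is
excluded by choosing `ψ(0)` large. With doubling it follows that `a(x, r) ≥ c r²` for all `x` and
`r` (`IsSol.lower`).

*Conclusion.* Let `F = √(1 + u² + v²)`, so that `ΔF ≥ F⁻³ (|∇u|² + |∇v|² + 2 u² v²) ≥ 0`. Around a
transition point, `a(x, ·)` increases by a definite amount between the radii `1` and `ρ(T)`, which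
forces `∫_{B_ρ(x)} ΔF ≥ c(T)` (`IsSol.mass_lower`). On the other hand `F ≤ C r` on `B_{4r}(x)` gives
`∫_{B_r(x)} ΔF ≤ C(T) r^{n-1}` (`IsSol.mass_upper`). Integrating the lower bound over the transition
region in `B_R` and exchanging the integrals (`measure_le_of_mass`) yields the claim.
-/

open MeasureTheory Metric Set
open scoped RealInnerProductSpace ENNReal

/-- Euclidean space `ℝⁿ`. -/
abbrev Euc (n : ℕ) := EuclideanSpace ℝ (Fin n)

/-- The Laplacian `Δu` of a function `u : ℝⁿ → ℝ`. -/
noncomputable def lap {n : ℕ} (u : Euc n → ℝ) (x : Euc n) : ℝ :=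
  ∑ i : Fin n,
    fderiv ℝ (fun y => fderiv ℝ u y (EuclideanSpace.single i 1)) x (EuclideanSpace.single i 1)

/-- The divergence `div Y = Σ_α ∂Y^α/∂x_α` of a vector field `Y`. -/
noncomputable def vdiv {n : ℕ} (Y : Euc n → Euc n) (x : Euc n) : ℝ :=
  ∑ i : Fin n, fderiv ℝ Y x (EuclideanSpace.single i 1) i

/-- `DY(p,q)(x) = Σ_{α,β} (∂Y^α/∂x_β)(x) p_α q_β`. -/
noncomputable def DYbil {n : ℕ} (Y : Euc n → Euc n) (p q x : Euc n) : ℝ :=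
  ∑ α : Fin n, ∑ β : Fin n,
    fderiv ℝ Y x (EuclideanSpace.single β 1) α * p α * q β

/-- The rescaled function `u_κ(x) = R⁻¹ u(x₀ + R x)` (with `κ = R⁴`). -/
noncomputable def resc {n : ℕ} (u : Euc n → ℝ) (x₀ : Euc n) (R : ℝ) (x : Euc n) : ℝ :=
  R⁻¹ * u (x₀ + R • x)

/-! ### Partial derivatives -/

/-- The partial derivative `∂ᵢ f`. -/
noncomputable def pd {n : ℕ} (i : Fin n) (f : Euc n → ℝ) (x : Euc n) : ℝ :=
  fderiv ℝ f x (EuclideanSpace.single i 1)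

/-- Smooth functions on `ℝⁿ`. -/
abbrev Smooth {n : ℕ} (f : Euc n → ℝ) : Prop := ContDiff ℝ (⊤ : ℕ∞) f

lemma lap_eq {n : ℕ} (f : Euc n → ℝ) (x : Euc n) : lap f x = ∑ i, pd i (pd i f) x := rfl

lemma Smooth.diff {n : ℕ} {f : Euc n → ℝ} (hf : Smooth f) : Differentiable ℝ f :=
  hf.differentiable (by simp)

lemma Smooth.pd {n : ℕ} {f : Euc n → ℝ} (hf : Smooth f) (i : Fin n) : Smooth (pd i f) := by
  have h : ContDiff ℝ (⊤ : ℕ∞) (fderiv ℝ f) := hf.fderiv_right (by norm_cast)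
  exact h.clm_apply contDiff_const

lemma Smooth.lap {n : ℕ} {f : Euc n → ℝ} (hf : Smooth f) : Smooth (lap f) := by
  change ContDiff ℝ _ fun x => ∑ i, _root_.pd i (_root_.pd i f) x
  exact ContDiff.sum fun i _ => (hf.pd i).pd i

lemma fderiv_eq_sum {n : ℕ} (f : Euc n → ℝ) (x y : Euc n) :
    fderiv ℝ f x y = ∑ i, y i * pd i f x := by
  have hy : y = ∑ i, y i • (EuclideanSpace.single i (1 : ℝ) : Euc n) := by
    ext j
    simp [Finset.sum_apply, Pi.single_apply]
  conv_lhs => rw [hy]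
  simp [map_sum, pd]

lemma pd_comm {n : ℕ} {f : Euc n → ℝ} (hf : Smooth f) (i j : Fin n) (x : Euc n) :
    pd i (pd j f) x = pd j (pd i f) x := by
  have h2 : Differentiable ℝ (fderiv ℝ f) :=
    (hf.fderiv_right (m := 1) (by norm_cast)).differentiable (by simp)
  have key : ∀ k l : Fin n, pd k (pd l f) x = fderiv ℝ (fderiv ℝ f) x
      (EuclideanSpace.single k 1) (EuclideanSpace.single l 1) := by
    intro k l
    have : pd l f = fun y => fderiv ℝ f y (EuclideanSpace.single l 1) := rfl
    rw [this, pd, fderiv_clm_apply (h2 x) (differentiableAt_const _)]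
    simp
  rw [key, key]
  have hs : IsSymmSndFDerivAt ℝ f x :=
    (hf.contDiffAt (x := x)).isSymmSndFDerivAt (by simp; norm_cast)
  exact hs _ _

lemma pd_add {n : ℕ} {f g : Euc n → ℝ} (hf : Smooth f) (hg : Smooth g) (i : Fin n) (x : Euc n) :
    pd i (fun y => f y + g y) x = pd i f x + pd i g x := by
  simp [pd, fderiv_fun_add (hf.diff x) (hg.diff x)]

lemma pd_mul {n : ℕ} {f g : Euc n → ℝ} (hf : Smooth f) (hg : Smooth g) (i : Fin n) (x : Euc n) :
    pd i (fun y => f y * g y) x = f x * pd i g x + g x * pd i f x := by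
  simp [pd, fderiv_fun_mul (hf.diff x) (hg.diff x)]

lemma pd_sq {n : ℕ} {f : Euc n → ℝ} (hf : Smooth f) (i : Fin n) (x : Euc n) :
    pd i (fun y => f y ^ 2) x = 2 * f x * pd i f x := by
  have := pd_mul hf hf i x
  simp only [← pow_two] at this
  rw [this]; ring

lemma pd_sum {n : ℕ} {f : Fin n → Euc n → ℝ} (hf : ∀ j, Smooth (f j)) (i : Fin n) (x : Euc n) :
    pd i (fun y => ∑ j, f j y) x = ∑ j, pd i (f j) x := by
  simp [pd, fderiv_fun_sum (fun j _ => (hf j).diff x)]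

lemma pd_coord {n : ℕ} (i j : Fin n) (x : Euc n) :
    pd i (fun y : Euc n => y j) x = if i = j then 1 else 0 := by
  have : (fun y : Euc n => y j) = (EuclideanSpace.proj j : Euc n →L[ℝ] ℝ) := rfl
  rw [pd, this, ContinuousLinearMap.fderiv]
  simp [eq_comm]

lemma smooth_coord {n : ℕ} (j : Fin n) : Smooth (fun y : Euc n => y j) :=
  (EuclideanSpace.proj j : Euc n →L[ℝ] ℝ).contDiff

lemma lap_mul {n : ℕ} {f g : Euc n → ℝ} (hf : Smooth f) (hg : Smooth g) (x : Euc n) :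
    lap (fun y => f y * g y) x
      = f x * lap g x + g x * lap f x + 2 * ∑ i, pd i f x * pd i g x := by
  simp only [lap_eq, Finset.mul_sum, ← Finset.sum_add_distrib]
  refine Finset.sum_congr rfl fun i _ => ?_
  have : pd i (fun y => f y * g y) = fun y => f y * pd i g y + g y * pd i f y :=
    funext fun y => pd_mul hf hg i y
  rw [this, pd_add (hf.mul (hg.pd i)) (hg.mul (hf.pd i)), pd_mul hf (hg.pd i),
    pd_mul hg (hf.pd i)]
  ring

lemma lap_sq {n : ℕ} {f : Euc n → ℝ} (hf : Smooth f) (x : Euc n) :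
    lap (fun y => f y ^ 2) x = 2 * f x * lap f x + 2 * ∑ i, pd i f x ^ 2 := by
  have h : (fun y => f y ^ 2) = fun y => f y * f y := by ext y; ring
  rw [h, lap_mul hf hf]
  simp only [pow_two]; ring

lemma lap_add {n : ℕ} {f g : Euc n → ℝ} (hf : Smooth f) (hg : Smooth g) (x : Euc n) :
    lap (fun y => f y + g y) x = lap f x + lap g x := by
  simp only [lap_eq, ← Finset.sum_add_distrib]
  refine Finset.sum_congr rfl fun i _ => ?_
  have : pd i (fun y => f y + g y) = fun y => pd i f y + pd i g y :=
    funext fun y => pd_add hf hg i y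
  rw [this, pd_add (hf.pd i) (hg.pd i)]

lemma hasDerivAt_line {n : ℕ} {f : Euc n → ℝ} (hf : Smooth f) (x y : Euc n) (r : ℝ) :
    HasDerivAt (fun s : ℝ => f (x + s • y)) (fderiv ℝ f (x + r • y) y) r := by
  have h1 : HasDerivAt (fun s : ℝ => x + s • y) y r := by
    simpa using ((hasDerivAt_id r).smul_const y).const_add x
  exact ((hf.diff (x + r • y)).hasFDerivAt).comp_hasDerivAt r h1

lemma smooth_comp_affine {n : ℕ} {f : Euc n → ℝ} (hf : Smooth f) (x : Euc n) (r : ℝ) :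
    Smooth (fun y => f (x + r • y)) :=
  hf.comp (contDiff_const.add (contDiff_id.const_smul r))

lemma pd_comp_affine {n : ℕ} {f : Euc n → ℝ} (hf : Smooth f) (x : Euc n) (r : ℝ) (i : Fin n)
    (y : Euc n) : pd i (fun y => f (x + r • y)) y = r * pd i f (x + r • y) := by
  have h1 : HasFDerivAt (fun y : Euc n => x + r • y) (r • ContinuousLinearMap.id ℝ (Euc n)) y :=
    ((hasFDerivAt_id y).const_smul r).const_add x
  have h2 := ((hf.diff (x + r • y)).hasFDerivAt).comp y h1
  have h3 : fderiv ℝ (fun y => f (x + r • y)) y = _ := h2.fderiv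
  rw [pd, h3]
  simp [pd]

/-! ### The weight and integration by parts -/

/-- The weight `ω(y) = (1 - |y|²)₊`; its powers serve as cutoffs on the unit ball. -/
noncomputable def wt {n : ℕ} (y : Euc n) : ℝ := max (1 - ‖y‖ ^ 2) 0

lemma wt_nonneg {n : ℕ} (y : Euc n) : 0 ≤ wt y := le_max_right _ _

lemma wt_le_one {n : ℕ} (y : Euc n) : wt y ≤ 1 :=
  max_le (by nlinarith [sq_nonneg ‖y‖]) zero_le_one

lemma wt_cont {n : ℕ} : Continuous (wt : Euc n → ℝ) := by
  unfold wt; fun_prop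

lemma wt_eq_zero {n : ℕ} {y : Euc n} (hy : 1 ≤ ‖y‖) : wt y = 0 :=
  max_eq_right (by nlinarith)

lemma wt_pow_cs {n : ℕ} (k : ℕ) (hk : k ≠ 0) :
    HasCompactSupport (fun y : Euc n => wt y ^ k) := by
  refine HasCompactSupport.intro (isCompact_closedBall (0 : Euc n) 1) fun y hy => ?_
  have : 1 ≤ ‖y‖ := by
    simp at hy; exact hy.le
  simp [wt_eq_zero this, hk]

lemma integrable_mul_wt {n : ℕ} {f : Euc n → ℝ} (hf : Continuous f) (k : ℕ) (hk : k ≠ 0) :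
    Integrable (fun y => f y * wt y ^ k) :=
  (hf.mul (wt_cont.pow k)).integrable_of_hasCompactSupport ((wt_pow_cs k hk).mul_left)

lemma hasDerivAt_max_cube (s : ℝ) :
    HasDerivAt (fun s : ℝ => max s 0 ^ 3) (3 * max s 0 ^ 2) s := by
  rcases lt_trichotomy s 0 with h | h | h
  · have : (fun s : ℝ => max s 0 ^ 3) =ᶠ[nhds s] fun _ => 0 := by
      filter_upwards [Iio_mem_nhds h] with t ht
      rw [max_eq_right (le_of_lt (mem_Iio.1 ht))]; norm_num
    simpa [max_eq_right h.le] using (hasDerivAt_const s (0 : ℝ)).congr_of_eventuallyEq this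
  · subst h
    rw [hasDerivAt_iff_isLittleO_nhds_zero]
    simp only [zero_add, max_self]
    have h2 : (fun h : ℝ => h ^ 2) =o[nhds 0] fun h => h := by
      simpa using Asymptotics.isLittleO_pow_id (𝕜 := ℝ) (n := 2) (by norm_num)
    refine Asymptotics.IsBigO.trans_isLittleO ?_ h2
    refine Asymptotics.IsBigO.of_bound 1 ?_
    filter_upwards [Metric.ball_mem_nhds (0 : ℝ) one_pos] with t ht
    have ht' : |t| < 1 := by simpa using ht
    have h0 : 0 ≤ max t 0 := le_max_right _ _
    have h1 : max t 0 ≤ |t| := max_le (le_abs_self t) (abs_nonneg t)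
    have e : max t 0 ^ 3 - 0 ^ 3 - t • (3 * (0 : ℝ) ^ 2) = max t 0 ^ 3 := by simp
    rw [e, Real.norm_eq_abs, Real.norm_eq_abs, abs_of_nonneg (pow_nonneg h0 3),
      abs_of_nonneg (sq_nonneg t), ← sq_abs t]
    have : max t 0 ^ 2 ≤ |t| ^ 2 := by gcongr
    nlinarith [pow_nonneg h0 2]
  · have : (fun s : ℝ => max s 0 ^ 3) =ᶠ[nhds s] fun s => s ^ 3 := by
      filter_upwards [Ioi_mem_nhds h] with t ht
      rw [max_eq_left (le_of_lt (mem_Ioi.1 ht))]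
    have h3 := (hasDerivAt_pow 3 s).congr_of_eventuallyEq this
    simpa [max_eq_left h.le] using h3

lemma hasFDerivAt_wt_cube {n : ℕ} (y : Euc n) :
    HasFDerivAt (fun y : Euc n => wt y ^ 3) ((-6 * wt y ^ 2) • innerSL ℝ y) y := by
  have h1 : HasFDerivAt (fun y : Euc n => 1 - ‖y‖ ^ 2) (-(2 • innerSL ℝ y)) y := by
    simpa using ((hasStrictFDerivAt_norm_sq y).hasFDerivAt).const_sub 1
  have h2 := (hasDerivAt_max_cube (1 - ‖y‖ ^ 2)).comp_hasFDerivAt y h1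
  have h3 : (3 * max (1 - ‖y‖ ^ 2) 0 ^ 2) • -(2 • innerSL ℝ y)
      = (-6 * wt y ^ 2) • innerSL ℝ y := by
    ext z
    simp [wt]; ring
  rw [h3] at h2
  exact h2

/-- Integration by parts against `ω³`, whose gradient is `-6 ω² y`. -/
lemma ibp {n : ℕ} {g : Euc n → ℝ} (hg : Smooth g) (i : Fin n) :
    ∫ y, pd i g y * wt y ^ 3 = 6 * ∫ y, g y * y i * wt y ^ 2 := by
  have hw : ∀ y : Euc n, fderiv ℝ (fun y : Euc n => wt y ^ 3) y (EuclideanSpace.single i 1)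
      = -6 * wt y ^ 2 * y i := by
    intro y
    rw [(hasFDerivAt_wt_cube y).fderiv]
    simp [EuclideanSpace.inner_single_right]
  have hci : Continuous fun y : Euc n => y i := (smooth_coord i).continuous
  have h := integral_mul_fderiv_eq_neg_fderiv_mul_of_integrable (μ := volume)
    (f := g) (g := fun y : Euc n => wt y ^ 3) (v := EuclideanSpace.single i 1)
    (integrable_mul_wt (hg.pd i).continuous 3 (by norm_num))
    (by
      simp only [hw]
      have := integrable_mul_wt (f := fun y => -6 * (g y * y i))
        (by have := hg.continuous; fun_prop) 2 (by norm_num)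
      refine this.congr (Filter.Eventually.of_forall fun y => ?_)
      simp only; ring)
    (integrable_mul_wt hg.continuous 3 (by norm_num))
    (fun x _ => hg.diff x) (fun x _ => (hasFDerivAt_wt_cube x).differentiableAt)
  simp only [hw] at h
  have h' : ∫ y, g y * (-6 * wt y ^ 2 * y i) = -6 * ∫ y, g y * y i * wt y ^ 2 := by
    rw [← integral_const_mul]
    congr 1; ext y; ring
  rw [h'] at h
  change _ = -∫ y, pd i g y * wt y ^ 3 at h
  linarith

/-! ### Weighted averages over balls -/

/-- `wint k f x r = ∫ f(x + r y) ω(y)ᵏ dy`, a weighted average of `f` over `B_r(x)`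
(up to a normalising factor). -/
noncomputable def wint {n : ℕ} (k : ℕ) (f : Euc n → ℝ) (x : Euc n) (r : ℝ) : ℝ :=
  ∫ y, f (x + r • y) * wt y ^ k

lemma hasDerivAt_wint {n : ℕ} {k : ℕ} (hk : k ≠ 0) {f : Euc n → ℝ} (hf : Smooth f) (x : Euc n)
    (r : ℝ) :
    HasDerivAt (wint k f x) (∫ y, fderiv ℝ f (x + r • y) y * wt y ^ k) r := by
  have hfd : Continuous (fderiv ℝ f) := hf.continuous_fderiv (by simp)
  have hcont : Continuous fun p : ℝ × Euc n => fderiv ℝ f (x + p.1 • p.2) p.2 := by fun_prop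
  obtain ⟨M, hM⟩ := ((isCompact_Icc (a := r - 1) (b := r + 1)).prod
    (isCompact_closedBall (0 : Euc n) 1)).exists_bound_of_continuousOn hcont.continuousOn
  refine (hasDerivAt_integral_of_dominated_loc_of_deriv_le (μ := volume)
    (F := fun s y => f (x + s • y) * wt y ^ k)
    (F' := fun s y => fderiv ℝ f (x + s • y) y * wt y ^ k)
    (bound := fun y => M * wt y ^ k) (s := Icc (r - 1) (r + 1))
    (Icc_mem_nhds (by linarith) (by linarith)) ?_ ?_ ?_ ?_ ?_ ?_).2
  · refine Filter.Eventually.of_forall fun s => ?_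
    exact (integrable_mul_wt (smooth_comp_affine hf x s).continuous k hk).aestronglyMeasurable
  · exact integrable_mul_wt (smooth_comp_affine hf x r).continuous k hk
  · exact (integrable_mul_wt (f := fun y => fderiv ℝ f (x + r • y) y) (by fun_prop) k
      hk).aestronglyMeasurable
  · refine Filter.Eventually.of_forall fun y s hs => ?_
    rcases le_or_gt ‖y‖ 1 with hy | hy
    · have := hM (s, y) ⟨hs, by simpa using hy⟩
      rw [norm_mul, Real.norm_of_nonneg (pow_nonneg (wt_nonneg y) k)]
      exact mul_le_mul_of_nonneg_right this (pow_nonneg (wt_nonneg y) k)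
    · simp [wt_eq_zero hy.le, hk]
  · exact integrable_mul_wt continuous_const k hk
  · refine Filter.Eventually.of_forall fun y s _ => ?_
    exact (hasDerivAt_line hf x y s).mul_const _

/-- The derivative in `r` of the weighted average of `f` sees only `Δf`. -/
lemma hasDerivAt_wint_two {n : ℕ} {f : Euc n → ℝ} (hf : Smooth f) (x : Euc n) (r : ℝ) :
    HasDerivAt (wint 2 f x) (r / 6 * wint 3 (lap f) x r) r := by
  convert hasDerivAt_wint (k := 2) (by norm_num) hf x r using 1
  have h1 : ∀ i : Fin n, r * ∫ y, pd i (pd i f) (x + r • y) * wt y ^ 3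
      = 6 * ∫ y, pd i f (x + r • y) * y i * wt y ^ 2 := by
    intro i
    rw [← ibp (smooth_comp_affine (hf.pd i) x r) i, ← integral_const_mul]
    congr 1; ext y
    rw [pd_comp_affine (hf.pd i)]; ring
  have h2 : wint 3 (lap f) x r = ∑ i, ∫ y, pd i (pd i f) (x + r • y) * wt y ^ 3 := by
    rw [wint, ← integral_finsetSum]
    · congr 1; ext y; rw [lap_eq, Finset.sum_mul]
    · intro i _
      exact integrable_mul_wt (smooth_comp_affine ((hf.pd i).pd i) x r).continuous 3 (by norm_num)
  have h3 : ∫ y, fderiv ℝ f (x + r • y) y * wt y ^ 2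
      = ∑ i, ∫ y, pd i f (x + r • y) * y i * wt y ^ 2 := by
    rw [← integral_finsetSum]
    · congr 1; ext y; rw [fderiv_eq_sum, Finset.sum_mul]
      exact Finset.sum_congr rfl fun i _ => by ring
    · intro i _
      exact integrable_mul_wt ((smooth_comp_affine (hf.pd i) x r).continuous.mul
        (smooth_coord i).continuous) 2 (by norm_num)
  rw [h2, h3, div_mul_eq_mul_div, Finset.mul_sum, Finset.sum_congr rfl fun i _ => h1 i,
    ← Finset.mul_sum]
  ring

/-- The normalising constant `∫ ω²`. -/
noncomputable def cw (n : ℕ) : ℝ := ∫ y : Euc n, wt y ^ 2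

lemma wt_pos {n : ℕ} {y : Euc n} (hy : ‖y‖ < 1) : 0 < wt y :=
  lt_max_of_lt_left (by nlinarith [norm_nonneg y])

lemma wt_pow_integrable {n : ℕ} (k : ℕ) (hk : k ≠ 0) : Integrable (fun y : Euc n => wt y ^ k) := by
  simpa using integrable_mul_wt (n := n) (f := fun _ => (1 : ℝ)) continuous_const k hk

lemma wint_integrable {n : ℕ} {k : ℕ} (hk : k ≠ 0) {f : Euc n → ℝ} (hf : Continuous f)
    (x : Euc n) (r : ℝ) : Integrable (fun y => f (x + r • y) * wt y ^ k) :=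
  integrable_mul_wt (by fun_prop) k hk

lemma wint_pos {n : ℕ} {k : ℕ} (hk : k ≠ 0) {f : Euc n → ℝ} (hf : Continuous f)
    (hpos : ∀ x, 0 < f x) (x : Euc n) (r : ℝ) : 0 < wint k f x r := by
  have hc : Continuous fun y : Euc n => f (x + r • y) * wt y ^ k :=
    (by fun_prop : Continuous fun y => f (x + r • y)).mul (wt_cont.pow k)
  refine hc.integral_pos_of_hasCompactSupport_nonneg_nonzero ((wt_pow_cs k hk).mul_left)
    (fun y => mul_nonneg (hpos _).le (pow_nonneg (wt_nonneg y) k)) (x := 0) ?_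
  exact (mul_pos (hpos _) (pow_pos (wt_pos (by simp)) k)).ne'

lemma wint_const {n : ℕ} (c : ℝ) (x : Euc n) (r : ℝ) : wint 2 (fun _ => c) x r = c * cw n := by
  rw [wint, cw, integral_const_mul]

lemma cw_pos (n : ℕ) : 0 < cw n := by
  have := wint_pos (n := n) (k := 2) (by norm_num) (f := fun _ => 1) continuous_const
    (fun _ => one_pos) 0 0
  rwa [wint_const, one_mul] at this

lemma wint_zero {n : ℕ} (f : Euc n → ℝ) (x : Euc n) : wint 2 f x 0 = f x * cw n := by
  simp [wint, cw, integral_const_mul]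

lemma wint_nonneg {n : ℕ} {k : ℕ} {f : Euc n → ℝ} (hpos : ∀ x, 0 ≤ f x) (x : Euc n) (r : ℝ) :
    0 ≤ wint k f x r :=
  integral_nonneg fun y => mul_nonneg (hpos _) (pow_nonneg (wt_nonneg y) k)

lemma wint_mono {n : ℕ} {k : ℕ} (hk : k ≠ 0) {f g : Euc n → ℝ} (hf : Continuous f)
    (hg : Continuous g) (x : Euc n) {r : ℝ} (hr : 0 ≤ r)
    (h : ∀ z, ‖z - x‖ ≤ r → f z ≤ g z) : wint k f x r ≤ wint k g x r := by
  refine integral_mono (wint_integrable hk hf x r) (wint_integrable hk hg x r) fun y => ?_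
  rcases le_or_gt ‖y‖ 1 with hy | hy
  · refine mul_le_mul_of_nonneg_right (h _ ?_) (pow_nonneg (wt_nonneg y) k)
    rw [add_sub_cancel_left, norm_smul, Real.norm_of_nonneg hr]
    nlinarith
  · simp [wt_eq_zero hy.le, hk]

lemma wint_add {n : ℕ} {k : ℕ} (hk : k ≠ 0) {f g : Euc n → ℝ} (hf : Continuous f)
    (hg : Continuous g) (x : Euc n) (r : ℝ) :
    wint k (fun z => f z + g z) x r = wint k f x r + wint k g x r := by
  simp only [wint, add_mul]
  exact integral_add (wint_integrable hk hf x r) (wint_integrable hk hg x r)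

lemma wint_const_mul {n : ℕ} {k : ℕ} (c : ℝ) (f : Euc n → ℝ) (x : Euc n) (r : ℝ) :
    wint k (fun z => c * f z) x r = c * wint k f x r := by
  simp only [wint, mul_assoc]
  exact integral_const_mul _ _

lemma wint_three_le_two {n : ℕ} {f : Euc n → ℝ} (hf : Continuous f) (hpos : ∀ x, 0 ≤ f x)
    (x : Euc n) (r : ℝ) : wint 3 f x r ≤ wint 2 f x r := by
  refine integral_mono (wint_integrable (by norm_num) hf x r)
    (wint_integrable (by norm_num) hf x r) fun y => ?_
  refine mul_le_mul_of_nonneg_left ?_ (hpos _)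
  exact pow_le_pow_of_le_one (wt_nonneg y) (wt_le_one y) (by norm_num)

lemma wint_two_mono {n : ℕ} {f : Euc n → ℝ} (hf : Smooth f) (hl : ∀ x, 0 ≤ lap f x) (x : Euc n)
    {r s : ℝ} (hr : 0 ≤ r) (hrs : r ≤ s) : wint 2 f x r ≤ wint 2 f x s := by
  have hmono : MonotoneOn (wint 2 f x) (Ici 0) := by
    refine monotoneOn_of_deriv_nonneg (convex_Ici 0)
      (fun t _ => (hasDerivAt_wint_two hf x t).continuousAt.continuousWithinAt)
      (fun t _ => (hasDerivAt_wint_two hf x t).differentiableAt.differentiableWithinAt) ?_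
    intro t ht
    rw [interior_Ici] at ht
    rw [(hasDerivAt_wint_two hf x t).deriv]
    exact mul_nonneg (div_nonneg (le_of_lt (mem_Ioi.1 ht)) (by norm_num)) (wint_nonneg hl x t)
  exact hmono (mem_Ici.2 hr) (mem_Ici.2 (hr.trans hrs)) hrs

/-- Mean value inequality for smooth subharmonic functions. -/
lemma mean_value {n : ℕ} {f : Euc n → ℝ} (hf : Smooth f) (hl : ∀ x, 0 ≤ lap f x) (x : Euc n)
    {r : ℝ} (hr : 0 ≤ r) : f x * cw n ≤ wint 2 f x r := by
  rw [← wint_zero]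
  exact wint_two_mono hf hl x le_rfl hr

/-- Weighted averages about one centre are controlled by weighted averages over a larger ball
about another centre. -/
lemma wint_compare {n : ℕ} {f : Euc n → ℝ} (hf : Continuous f) (hpos : ∀ x, 0 ≤ f x) {x z : Euc n}
    {r R : ℝ} (hr : 0 < r) (hR : 0 < R) (h : ‖z - x‖ + r ≤ R / 2) :
    wint 2 f z r ≤ 2 * (R / r) ^ n * wint 2 f x R := by
  -- affine substitution matching the point `z + r y` with `x + R y₁`
  set c : Euc n := (1 / r) • (x - z) with hc
  have h1 : wint 2 f z r = (R / r) ^ n * ∫ y, f (x + R • y) * wt (c + (R / r) • y) ^ 2 := by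
    have e1 : wint 2 f z r = ∫ y, f (z + r • (c + y)) * wt (c + y) ^ 2 := by
      rw [wint, ← integral_add_left_eq_self _ c]
    have e2 := Measure.integral_comp_smul (volume : Measure (Euc n))
      (fun y => f (z + r • (c + y)) * wt (c + y) ^ 2) (R / r)
    rw [e1]
    have e3 : ∀ y : Euc n, z + r • (c + (R / r) • y) = x + R • y := by
      intro y
      rw [smul_add, hc, smul_smul, smul_smul, mul_one_div_cancel hr.ne', mul_div_cancel₀ _ hr.ne',
        one_smul]
      abel
    simp only [e3] at e2
    rw [e2, finrank_euclideanSpace_fin, abs_of_pos (by positivity), smul_eq_mul, ← mul_assoc,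
      mul_inv_cancel₀ (by positivity), one_mul]
  have hcont : Continuous fun y : Euc n => f (x + R • y) := by fun_prop
  have hInt2 : Integrable fun y : Euc n => 2 * (f (x + R • y) * wt y ^ 2) :=
    (integrable_mul_wt hcont 2 (by norm_num)).const_mul 2
  have hle : ∀ y : Euc n, f (x + R • y) * wt (c + (R / r) • y) ^ 2
      ≤ 2 * (f (x + R • y) * wt y ^ 2) := by
    intro y
    rcases le_or_gt 1 ‖c + (R / r) • y‖ with hy | hy
    · rw [wt_eq_zero hy]
      have := mul_nonneg (hpos (x + R • y)) (sq_nonneg (wt y))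
      simp only [ne_eq, OfNat.ofNat_ne_zero, not_false_eq_true, zero_pow, mul_zero]
      linarith
    · have hyn : ‖y‖ ≤ 1 / 2 := by
        have e : R • y = r • (c + (R / r) • y) + (z - x) := by
          rw [smul_add, hc, smul_smul, smul_smul, mul_one_div_cancel hr.ne',
            mul_div_cancel₀ _ hr.ne', one_smul]
          abel
        have h2 : R * ‖y‖ ≤ r * 1 + ‖z - x‖ := by
          calc R * ‖y‖ = ‖R • y‖ := by rw [norm_smul, Real.norm_of_nonneg hR.le]
            _ ≤ ‖r • (c + (R / r) • y)‖ + ‖z - x‖ := by rw [e]; exact norm_add_le _ _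
            _ ≤ _ := by
              rw [norm_smul, Real.norm_of_nonneg hr.le]; gcongr
        nlinarith
      have hw : 3 / 4 ≤ wt y := le_max_of_le_left (by nlinarith [norm_nonneg y])
      have h3 : wt (c + (R / r) • y) ^ 2 ≤ 1 := pow_le_one₀ (wt_nonneg _) (wt_le_one _)
      have h4 : 1 ≤ 2 * wt y ^ 2 := by nlinarith
      nlinarith [hpos (x + R • y)]
  have h5 : ∫ y, f (x + R • y) * wt (c + (R / r) • y) ^ 2 ≤ 2 * wint 2 f x R := by
    rw [wint, ← integral_const_mul]
    exact integral_mono_of_nonneg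
      (Filter.Eventually.of_forall fun y => mul_nonneg (hpos _) (sq_nonneg _)) hInt2
      (Filter.Eventually.of_forall hle)
  rw [h1]
  have : 0 ≤ (R / r) ^ n := by positivity
  nlinarith

/-! ### A Pohozaev identity -/

/-- `|∇w|²`. -/
noncomputable def gsq {n : ℕ} (w : Euc n → ℝ) (z : Euc n) : ℝ := ∑ j, pd j w z ^ 2

lemma smooth_gsq {n : ℕ} {w : Euc n → ℝ} (hw : Smooth w) : Smooth (gsq w) :=
  ContDiff.sum fun j _ => (hw.pd j).pow 2

lemma gsq_nonneg {n : ℕ} (w : Euc n → ℝ) (z : Euc n) : 0 ≤ gsq w z :=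
  Finset.sum_nonneg fun _ _ => sq_nonneg _

lemma fderiv_gsq {n : ℕ} {w : Euc n → ℝ} (hw : Smooth w) (z y : Euc n) :
    fderiv ℝ (gsq w) z y = 2 * ∑ j, pd j w z * ∑ i, y i * pd j (pd i w) z := by
  rw [fderiv_eq_sum]
  have h : ∀ i, pd i (gsq w) z = ∑ j, 2 * pd j w z * pd i (pd j w) z := by
    intro i
    have : gsq w = fun z => ∑ j, pd j w z ^ 2 := rfl
    rw [this, pd_sum (fun j => (hw.pd j).pow 2)]
    exact Finset.sum_congr rfl fun j _ => pd_sq (hw.pd j) i z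
  simp only [h, Finset.mul_sum]
  rw [Finset.sum_comm]
  refine Finset.sum_congr rfl fun j _ => Finset.sum_congr rfl fun i _ => ?_
  rw [pd_comm hw i j]; ring

/-- The Pohozaev identity for a single function: integrate the divergence of
`y ↦ (y·∇w) ∇w` against `ω³`. -/
lemma pohozaev_single {n : ℕ} {w : Euc n → ℝ} (hw : Smooth w) (x : Euc n) (r : ℝ) :
    ∫ y, (gsq w (x + r • y) + r / 2 * fderiv ℝ (gsq w) (x + r • y) y
      + r * (fderiv ℝ w (x + r • y) y * lap w (x + r • y))) * wt y ^ 3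
      = 6 * ∫ y, fderiv ℝ w (x + r • y) y ^ 2 * wt y ^ 2 := by
  set Y : Euc n → ℝ := fun y => ∑ i, y i * pd i w (x + r • y) with hY
  have hYi : ∀ i : Fin n, Smooth fun y : Euc n => y i * pd i w (x + r • y) := fun i =>
    (smooth_coord i).mul (smooth_comp_affine (hw.pd i) x r)
  have hYs : Smooth Y := ContDiff.sum fun i _ => hYi i
  have hYe : ∀ y, fderiv ℝ w (x + r • y) y = Y y := fun y => fderiv_eq_sum w _ y
  have hpY : ∀ (j : Fin n) (y : Euc n), pd j Y y
      = pd j w (x + r • y) + r * ∑ i, y i * pd j (pd i w) (x + r • y) := by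
    intro j y
    rw [hY, pd_sum hYi]
    have : ∀ i, pd j (fun y : Euc n => y i * pd i w (x + r • y)) y
        = (if j = i then pd i w (x + r • y) else 0)
          + r * (y i * pd j (pd i w) (x + r • y)) := by
      intro i
      rw [pd_mul (smooth_coord i) (smooth_comp_affine (hw.pd i) x r),
        pd_comp_affine (hw.pd i), pd_coord]
      split_ifs <;> ring
    rw [Finset.sum_congr rfl fun i _ => this i, Finset.sum_add_distrib, ← Finset.mul_sum]
    simp
  have hg : ∀ j : Fin n, Smooth fun y => Y y * pd j w (x + r • y) := fun j =>
    hYs.mul (smooth_comp_affine (hw.pd j) x r)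
  have hdiv : ∀ y, gsq w (x + r • y) + r / 2 * fderiv ℝ (gsq w) (x + r • y) y
      + r * (fderiv ℝ w (x + r • y) y * lap w (x + r • y))
      = ∑ j, pd j (fun y => Y y * pd j w (x + r • y)) y := by
    intro y
    have : ∀ j, pd j (fun y => Y y * pd j w (x + r • y)) y
        = pd j w (x + r • y) ^ 2
          + r * (pd j w (x + r • y) * ∑ i, y i * pd j (pd i w) (x + r • y))
          + r * (Y y * pd j (pd j w) (x + r • y)) := by
      intro j
      rw [pd_mul hYs (smooth_comp_affine (hw.pd j) x r), pd_comp_affine (hw.pd j), hpY]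
      ring
    rw [Finset.sum_congr rfl fun j _ => this j, Finset.sum_add_distrib, Finset.sum_add_distrib,
      ← Finset.mul_sum, ← Finset.mul_sum, ← Finset.mul_sum, fderiv_gsq hw, hYe, ← lap_eq, gsq]
    ring
  have h1 : ∀ j : Fin n, ∫ y, pd j (fun y => Y y * pd j w (x + r • y)) y * wt y ^ 3
      = 6 * ∫ y, Y y * pd j w (x + r • y) * y j * wt y ^ 2 := fun j => ibp (hg j) j
  simp only [hdiv]
  simp only [hYe]
  simp only [Finset.sum_mul]
  have i1 : ∀ j : Fin n, Integrable fun y => Y y * pd j w (x + r • y) * y j * wt y ^ 2 :=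
    fun j => integrable_mul_wt ((hg j).continuous.mul (smooth_coord j).continuous) 2 (by norm_num)
  rw [integral_finsetSum _ fun j _ => integrable_mul_wt ((hg j).pd j).continuous 3 (by norm_num),
    Finset.sum_congr rfl fun j _ => h1 j, ← Finset.mul_sum,
    ← integral_finsetSum _ fun j _ => i1 j]
  congr 2
  ext y
  rw [← Finset.sum_mul]
  congr 1
  rw [pow_two]
  conv_rhs => rw [hY]
  simp only
  rw [Finset.sum_mul_sum]
  simp only [hY, Finset.sum_mul]
  rw [Finset.sum_comm]
  refine Finset.sum_congr rfl fun i _ => Finset.sum_congr rfl fun j _ => ?_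
  ring

/-! ### Almgren's frequency -/

/-- Positive smooth solutions of the system with linear growth. -/
structure IsSol {n : ℕ} (u v : Euc n → ℝ) (C₀ : ℝ) : Prop where
  hu : Smooth u
  hv : Smooth v
  hupos : ∀ x, 0 < u x
  hvpos : ∀ x, 0 < v x
  hequ : ∀ x, lap u x = u x * v x ^ 2
  heqv : ∀ x, lap v x = v x * u x ^ 2
  hC₀ : 0 < C₀
  hgrowth : ∀ x, u x + v x ≤ C₀ * (1 + ‖x‖)

/-- `u² + v²`. -/
noncomputable def usq {n : ℕ} (u v : Euc n → ℝ) (z : Euc n) : ℝ := u z ^ 2 + v z ^ 2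

/-- The interaction density `u² v²`. -/
noncomputable def pot {n : ℕ} (u v : Euc n → ℝ) (z : Euc n) : ℝ := u z ^ 2 * v z ^ 2

/-- The energy density `|∇u|² + |∇v|² + u² v²`. -/
noncomputable def edens {n : ℕ} (u v : Euc n → ℝ) (z : Euc n) : ℝ :=
  gsq u z + gsq v z + pot u v z

/-- `∫ ((y·∇u)² + (y·∇v)²) ω²`, the radial part of the energy. -/
noncomputable def radial {n : ℕ} (u v : Euc n → ℝ) (x : Euc n) (r : ℝ) : ℝ :=
  ∫ y, (fderiv ℝ u (x + r • y) y ^ 2 + fderiv ℝ v (x + r • y) y ^ 2) * wt y ^ 2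

section
variable {n : ℕ} {u v : Euc n → ℝ} {C₀ : ℝ}

lemma IsSol.smooth_usq (h : IsSol u v C₀) : Smooth (usq u v) := (h.hu.pow 2).add (h.hv.pow 2)
lemma IsSol.smooth_pot (h : IsSol u v C₀) : Smooth (pot u v) := (h.hu.pow 2).mul (h.hv.pow 2)
lemma IsSol.smooth_edens (h : IsSol u v C₀) : Smooth (edens u v) :=
  ((smooth_gsq h.hu).add (smooth_gsq h.hv)).add h.smooth_pot

lemma IsSol.usq_pos (h : IsSol u v C₀) (z : Euc n) : 0 < usq u v z := by
  have := h.hupos z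
  have := h.hvpos z
  unfold usq; positivity

lemma pot_nonneg (z : Euc n) : 0 ≤ pot u v z := by unfold pot; positivity

lemma edens_nonneg (z : Euc n) : 0 ≤ edens u v z :=
  add_nonneg (add_nonneg (gsq_nonneg _ _) (gsq_nonneg _ _)) (pot_nonneg z)

lemma IsSol.lap_usq (h : IsSol u v C₀) (z : Euc n) :
    lap (usq u v) z = 2 * (edens u v z + pot u v z) := by
  have : usq u v = fun z => u z ^ 2 + v z ^ 2 := rfl
  rw [this, lap_add (h.hu.pow 2) (h.hv.pow 2), lap_sq h.hu, lap_sq h.hv, h.hequ, h.heqv]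
  simp only [edens, gsq, pot]; ring

lemma IsSol.lap_usq_nonneg (h : IsSol u v C₀) (z : Euc n) : 0 ≤ lap (usq u v) z := by
  rw [h.lap_usq]
  have := edens_nonneg (u := u) (v := v) z
  have := pot_nonneg (u := u) (v := v) z
  positivity

lemma IsSol.lap_u_nonneg (h : IsSol u v C₀) (z : Euc n) : 0 ≤ lap u z := by
  rw [h.hequ]; have := h.hupos z; positivity

lemma IsSol.swap (h : IsSol u v C₀) : IsSol v u C₀ :=
  ⟨h.hv, h.hu, h.hvpos, h.hupos, h.heqv, h.hequ, h.hC₀, fun x => by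
    rw [add_comm]; exact h.hgrowth x⟩

lemma IsSol.hasDerivAt_height (h : IsSol u v C₀) (x : Euc n) (r : ℝ) :
    HasDerivAt (wint 2 (usq u v) x)
      (r / 3 * (wint 3 (edens u v) x r + wint 3 (pot u v) x r)) r := by
  have h1 := hasDerivAt_wint_two h.smooth_usq x r
  have h2 : wint 3 (lap (usq u v)) x r
      = 2 * (wint 3 (edens u v) x r + wint 3 (pot u v) x r) := by
    rw [← wint_add (by norm_num) h.smooth_edens.continuous h.smooth_pot.continuous,
      ← wint_const_mul]
    congr 1
    exact funext h.lap_usq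
  rw [h2] at h1
  convert h1 using 1
  ring

lemma continuous_radial_term {w : Euc n → ℝ} (hw : Smooth w) (x : Euc n) (r : ℝ) :
    Continuous fun y => fderiv ℝ w (x + r • y) y := by
  have hfd : Continuous (fderiv ℝ w) := hw.continuous_fderiv (by simp)
  fun_prop

/-- The derivative of the energy, from the Pohozaev identities for `u` and `v`. -/
lemma IsSol.hasDerivAt_energy (h : IsSol u v C₀) (x : Euc n) (r : ℝ) :
    ∃ d' : ℝ, HasDerivAt (wint 3 (edens u v) x) d' r ∧
      r * d' = 12 * radial u v x r - 2 * wint 3 (edens u v) x r + 2 * wint 3 (pot u v) x r := by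
  refine ⟨_, hasDerivAt_wint (by norm_num) h.smooth_edens x r, ?_⟩
  have hU := pohozaev_single h.hu x r
  have hV := pohozaev_single h.hv x r
  have hcu := continuous_radial_term h.hu x r
  have hcv := continuous_radial_term h.hv x r
  have hcgu := continuous_radial_term (smooth_gsq h.hu) x r
  have hcgv := continuous_radial_term (smooth_gsq h.hv) x r
  have hce := continuous_radial_term h.smooth_edens x r
  have hgu := (smooth_comp_affine (smooth_gsq h.hu) x r).continuous
  have hgv := (smooth_comp_affine (smooth_gsq h.hv) x r).continuous
  have hlu := (smooth_comp_affine h.hu.lap x r).continuous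
  have hlv := (smooth_comp_affine h.hv.lap x r).continuous
  have hsum := integral_add
    (integrable_mul_wt ((hgu.add (continuous_const.mul hcgu)).add
      (continuous_const.mul (hcu.mul hlu))) 3 (by norm_num) : Integrable fun y =>
        (gsq u (x + r • y) + r / 2 * fderiv ℝ (gsq u) (x + r • y) y
      + r * (fderiv ℝ u (x + r • y) y * lap u (x + r • y))) * wt y ^ 3)
    (integrable_mul_wt ((hgv.add (continuous_const.mul hcgv)).add
      (continuous_const.mul (hcv.mul hlv))) 3 (by norm_num) : Integrable fun y =>
        (gsq v (x + r • y) + r / 2 * fderiv ℝ (gsq v) (x + r • y) y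
      + r * (fderiv ℝ v (x + r • y) y * lap v (x + r • y))) * wt y ^ 3)
  rw [hU, hV] at hsum
  have hrad : radial u v x r = (∫ y, fderiv ℝ u (x + r • y) y ^ 2 * wt y ^ 2)
      + ∫ y, fderiv ℝ v (x + r • y) y ^ 2 * wt y ^ 2 := by
    have i1 : Integrable fun y => fderiv ℝ u (x + r • y) y ^ 2 * wt y ^ 2 :=
      integrable_mul_wt (hcu.pow 2) 2 (by norm_num)
    have i2 : Integrable fun y => fderiv ℝ v (x + r • y) y ^ 2 * wt y ^ 2 :=
      integrable_mul_wt (hcv.pow 2) 2 (by norm_num)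
    rw [radial, ← integral_add i1 i2]
    congr 1; ext y; ring
  have hpe : ∀ z y : Euc n, fderiv ℝ (edens u v) z y = fderiv ℝ (gsq u) z y
      + fderiv ℝ (gsq v) z y + 2 * (fderiv ℝ u z y * lap u z + fderiv ℝ v z y * lap v z) := by
    intro z y
    have e1 : edens u v = fun z => gsq u z + gsq v z + u z ^ 2 * v z ^ 2 := rfl
    have du := h.hu.diff z
    have dv := h.hv.diff z
    have dgu := (smooth_gsq h.hu).diff z
    have dgv := (smooth_gsq h.hv).diff z
    rw [e1, fderiv_fun_add (dgu.fun_add dgv) ((du.fun_pow 2).fun_mul (dv.fun_pow 2)), fderiv_fun_add dgu dgv,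
      fderiv_fun_mul (du.fun_pow 2) (dv.fun_pow 2), fderiv_fun_pow 2 du, fderiv_fun_pow 2 dv, h.hequ,
      h.heqv]
    simp
    ring
  have hfin : (∫ y, (gsq u (x + r • y) + r / 2 * fderiv ℝ (gsq u) (x + r • y) y
      + r * (fderiv ℝ u (x + r • y) y * lap u (x + r • y))) * wt y ^ 3 +
      (gsq v (x + r • y) + r / 2 * fderiv ℝ (gsq v) (x + r • y) y
      + r * (fderiv ℝ v (x + r • y) y * lap v (x + r • y))) * wt y ^ 3)
      = wint 3 (edens u v) x r - wint 3 (pot u v) x r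
        + r / 2 * ∫ y, fderiv ℝ (edens u v) (x + r • y) y * wt y ^ 3 := by
    rw [wint, wint, ← integral_sub, ← integral_const_mul, ← integral_add]
    · congr 1; ext y
      rw [hpe, edens]; ring
    · exact (wint_integrable (by norm_num) h.smooth_edens.continuous x r).sub
        (wint_integrable (by norm_num) h.smooth_pot.continuous x r)
    · exact (integrable_mul_wt hce 3 (by norm_num)).const_mul _
    · exact wint_integrable (by norm_num) h.smooth_edens.continuous x r
    · exact wint_integrable (by norm_num) h.smooth_pot.continuous x r
  rw [hfin] at hsum
  rw [hrad]
  linarith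

/-- Cauchy–Schwarz between the height and the radial energy. -/
lemma IsSol.cauchy_schwarz (h : IsSol u v C₀) (x : Euc n) (r : ℝ) :
    (r / 6 * (wint 3 (edens u v) x r + wint 3 (pot u v) x r)) ^ 2
      ≤ radial u v x r * wint 2 (usq u v) x r := by
  have hcu := continuous_radial_term h.hu x r
  have hcv := continuous_radial_term h.hv x r
  have hu := (smooth_comp_affine h.hu x r).continuous
  have hv := (smooth_comp_affine h.hv x r).continuous
  have ha := (hasDerivAt_wint (k := 2) (by norm_num) h.smooth_usq x r).unique
    (h.hasDerivAt_height x r)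
  have hpu : ∀ z y : Euc n, fderiv ℝ (usq u v) z y
      = 2 * (u z * fderiv ℝ u z y + v z * fderiv ℝ v z y) := by
    intro z y
    have e1 : usq u v = fun z => u z ^ 2 + v z ^ 2 := rfl
    have du := h.hu.diff z
    have dv := h.hv.diff z
    rw [e1, fderiv_fun_add (du.fun_pow 2) (dv.fun_pow 2), fderiv_fun_pow 2 du, fderiv_fun_pow 2 dv]
    simp
    ring
  set B : ℝ := ∫ y, (u (x + r • y) * fderiv ℝ u (x + r • y) y
    + v (x + r • y) * fderiv ℝ v (x + r • y) y) * wt y ^ 2 with hB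
  have hB2 : B = r / 6 * (wint 3 (edens u v) x r + wint 3 (pot u v) x r) := by
    have : ∫ y, fderiv ℝ (usq u v) (x + r • y) y * wt y ^ 2 = 2 * B := by
      rw [hB, ← integral_const_mul]
      congr 1; ext y; rw [hpu]; ring
    rw [this] at ha
    linarith
  have hA := wint_pos (k := 2) (by norm_num) h.smooth_usq.continuous h.usq_pos x r
  have hquad : ∀ t : ℝ, 0 ≤ radial u v x r - 2 * t * B + t ^ 2 * wint 2 (usq u v) x r := by
    intro t
    have : radial u v x r - 2 * t * B + t ^ 2 * wint 2 (usq u v) x r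
        = ∫ y, ((fderiv ℝ u (x + r • y) y - t * u (x + r • y)) ^ 2
          + (fderiv ℝ v (x + r • y) y - t * v (x + r • y)) ^ 2) * wt y ^ 2 := by
      rw [radial, hB, wint, ← integral_const_mul, ← integral_const_mul, ← integral_sub,
        ← integral_add]
      · congr 1; ext y; rw [usq]; ring
      · exact (integrable_mul_wt ((hcu.pow 2).add (hcv.pow 2)) 2 (by norm_num)).sub
          ((integrable_mul_wt ((hu.mul hcu).add (hv.mul hcv)) 2 (by norm_num)).const_mul _)
      · exact (wint_integrable (by norm_num) h.smooth_usq.continuous x r).const_mul _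
      · exact integrable_mul_wt ((hcu.pow 2).add (hcv.pow 2)) 2 (by norm_num)
      · exact (integrable_mul_wt ((hu.mul hcu).add (hv.mul hcv)) 2 (by norm_num)).const_mul _
    rw [this]
    exact integral_nonneg fun y => mul_nonneg (add_nonneg (sq_nonneg _) (sq_nonneg _))
      (sq_nonneg _)
  have := hquad (B / wint 2 (usq u v) x r)
  rw [← hB2]
  have e : radial u v x r - 2 * (B / wint 2 (usq u v) x r) * B
      + (B / wint 2 (usq u v) x r) ^ 2 * wint 2 (usq u v) x r
      = radial u v x r - B ^ 2 / wint 2 (usq u v) x r := by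
    field_simp; ring
  rw [e, sub_nonneg, div_le_iff₀ hA] at this
  exact this

end

/-! ### Doubling -/

section
variable {n : ℕ} {u v : Euc n → ℝ} {C₀ : ℝ}

/-- Almgren's frequency `r² d / a`, where `a(x, r) = wint 2 (usq u v) x r` is the height and
`d(x, r) = wint 3 (edens u v) x r` the energy. -/
noncomputable def freq (u v : Euc n → ℝ) (x : Euc n) (r : ℝ) : ℝ :=
  r ^ 2 * wint 3 (edens u v) x r / wint 2 (usq u v) x r

lemma IsSol.height_pos (h : IsSol u v C₀) (x : Euc n) (r : ℝ) : 0 < wint 2 (usq u v) x r :=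
  wint_pos (by norm_num) h.smooth_usq.continuous h.usq_pos x r

/-- Monotonicity of the frequency, with a quantitative term controlling the interaction energy. -/
lemma IsSol.hasDerivAt_freq (h : IsSol u v C₀) (x : Euc n) {r : ℝ} (hr : 0 < r) :
    ∃ N' : ℝ, HasDerivAt (freq u v x) N' r ∧
      2 * (r ^ 2 * wint 3 (pot u v) x r / wint 2 (usq u v) x r) ≤ r * N' := by
  obtain ⟨d', hd', hd⟩ := h.hasDerivAt_energy x r
  have ha := h.hasDerivAt_height x r
  have hpos := h.height_pos x r
  have hcs := h.cauchy_schwarz x r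
  have hd0 : 0 ≤ wint 3 (edens u v) x r := wint_nonneg edens_nonneg x r
  have hp0 : 0 ≤ wint 3 (pot u v) x r := wint_nonneg pot_nonneg x r
  have hN := (((hasDerivAt_id r).pow 2).mul hd').div ha hpos.ne'
  refine ⟨_, hN, ?_⟩
  simp only [id, Pi.mul_apply, Pi.pow_apply]
  set a := wint 2 (usq u v) x r
  set d := wint 3 (edens u v) x r
  set p := wint 3 (pot u v) x r
  set s := radial u v x r
  have hs : r ^ 2 * (d + p) ^ 2 / (36 * a) ≤ s := by
    rw [div_le_iff₀ (by positivity)]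
    nlinarith
  have e : r * ((((2 : ℕ) : ℝ) * r ^ (2 - 1) * 1 * d + r ^ 2 * d') * a
      - r ^ 2 * d * (r / 3 * (d + p))) / a ^ 2
      = 12 * r ^ 2 * s / a + 2 * (r ^ 2 * p / a) - r ^ 4 * (d * (d + p)) / (3 * a ^ 2) := by
    have : r * ((((2 : ℕ) : ℝ) * r ^ (2 - 1) * 1 * d + r ^ 2 * d') * a
      - r ^ 2 * d * (r / 3 * (d + p))) = (2 * r ^ 2 * d + r ^ 2 * (r * d')) * a
      - r ^ 2 * d * (r ^ 2 / 3 * (d + p)) := by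
      norm_num; ring
    rw [this, hd]
    field_simp; ring
  rw [mul_div_assoc] at e
  rw [e]
  have h2 : r ^ 4 * (d * (d + p)) / (3 * a ^ 2) ≤ 12 * r ^ 2 * s / a := by
    have : r ^ 4 * (d * (d + p)) / (3 * a ^ 2) ≤ r ^ 4 * ((d + p) * (d + p)) / (3 * a ^ 2) := by
      gcongr; linarith
    have h3 : r ^ 4 * ((d + p) * (d + p)) / (3 * a ^ 2)
        = 12 * r ^ 2 * (r ^ 2 * (d + p) ^ 2 / (36 * a)) / a := by
      field_simp; ring
    rw [h3] at this
    exact this.trans (by gcongr)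
  linarith

lemma IsSol.freq_mono (h : IsSol u v C₀) (x : Euc n) : MonotoneOn (freq u v x) (Ioi 0) := by
  refine monotoneOn_of_deriv_nonneg (convex_Ioi 0) ?_ ?_ ?_
  · intro r hr
    obtain ⟨N', hN, -⟩ := h.hasDerivAt_freq x hr
    exact hN.continuousAt.continuousWithinAt
  · intro r hr
    rw [interior_Ioi] at hr
    obtain ⟨N', hN, -⟩ := h.hasDerivAt_freq x hr
    exact hN.differentiableAt.differentiableWithinAt
  · intro r hr
    rw [interior_Ioi] at hr
    obtain ⟨N', hN, hle⟩ := h.hasDerivAt_freq x hr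
    rw [hN.deriv]
    have hpos := h.height_pos x r
    have hp0 : 0 ≤ wint 3 (pot u v) x r := wint_nonneg pot_nonneg x r
    have : 0 ≤ r * N' := le_trans (by positivity) hle
    exact nonneg_of_mul_nonneg_right this hr

lemma freq_nonneg (h : IsSol u v C₀) (x : Euc n) (r : ℝ) : 0 ≤ freq u v x r := by
  have hpos := h.height_pos x r
  have hd0 : 0 ≤ wint 3 (edens u v) x r := wint_nonneg edens_nonneg x r
  unfold freq; positivity

lemma IsSol.usq_le (h : IsSol u v C₀) (z : Euc n) : usq u v z ≤ (C₀ * (1 + ‖z‖)) ^ 2 := by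
  have h1 := h.hgrowth z
  have h2 := h.hupos z
  have h3 := h.hvpos z
  unfold usq
  nlinarith [mul_pos h2 h3]

lemma IsSol.height_le (h : IsSol u v C₀) (x : Euc n) {r : ℝ} (hr : 1 + ‖x‖ ≤ r) :
    wint 2 (usq u v) x r ≤ 4 * C₀ ^ 2 * cw n * r ^ 2 := by
  have hC := h.hC₀
  have hr0 : 0 ≤ r := by linarith [norm_nonneg x]
  have := wint_mono (k := 2) (by norm_num) h.smooth_usq.continuous
    (continuous_const (y := 4 * C₀ ^ 2 * r ^ 2)) x hr0 (fun z hz => by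
      refine (h.usq_le z).trans ?_
      have hz' : ‖z‖ ≤ ‖z - x‖ + ‖x‖ := by simpa using norm_add_le (z - x) x
      have : (C₀ * (1 + ‖z‖)) ^ 2 ≤ (C₀ * (2 * r)) ^ 2 := by
        gcongr; linarith
      linarith)
  rw [wint_const] at this
  linarith

lemma IsSol.hasDerivAt_log_height (h : IsSol u v C₀) (x : Euc n) (r : ℝ) :
    HasDerivAt (fun r => Real.log (wint 2 (usq u v) x r))
      (r / 3 * (wint 3 (edens u v) x r + wint 3 (pot u v) x r) / wint 2 (usq u v) x r) r :=
  (h.hasDerivAt_height x r).log (h.height_pos x r).ne'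

/-- Linear growth bounds the frequency; the normalisation is such that homogeneity one
corresponds to frequency `6`. -/
lemma IsSol.freq_le (h : IsSol u v C₀) (x : Euc n) {r₀ : ℝ} (hr₀ : 0 < r₀) :
    freq u v x r₀ ≤ 6 := by
  by_contra! hN
  set α : ℝ := freq u v x r₀ / 3 with hα
  have hα2 : 2 < α := by rw [hα]; linarith
  have hmono : MonotoneOn (fun r => Real.log (wint 2 (usq u v) x r) - α * Real.log r)
      (Ici r₀) := by
    have hder : ∀ r : ℝ, 0 < r → HasDerivAt
        (fun r => Real.log (wint 2 (usq u v) x r) - α * Real.log r)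
        (r / 3 * (wint 3 (edens u v) x r + wint 3 (pot u v) x r) / wint 2 (usq u v) x r
          - α * r⁻¹) r := fun r hr =>
      (h.hasDerivAt_log_height x r).sub ((Real.hasDerivAt_log hr.ne').const_mul α)
    refine monotoneOn_of_deriv_nonneg (convex_Ici r₀)
      (fun r hr => (hder r (hr₀.trans_le hr)).continuousAt.continuousWithinAt) ?_ ?_
    · intro r hr
      rw [interior_Ici] at hr
      exact (hder r (hr₀.trans hr)).differentiableAt.differentiableWithinAt
    · intro r hr
      rw [interior_Ici] at hr
      have hr0 : 0 < r := hr₀.trans hr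
      rw [(hder r hr0).deriv]
      have hm := h.freq_mono x (mem_Ioi.2 hr₀) (mem_Ioi.2 hr0) (le_of_lt hr)
      have hpos := h.height_pos x r
      have hp0 : 0 ≤ wint 3 (pot u v) x r := wint_nonneg pot_nonneg x r
      have e : r / 3 * (wint 3 (edens u v) x r + wint 3 (pot u v) x r) / wint 2 (usq u v) x r
          - α * r⁻¹ = r⁻¹ / 3 * (freq u v x r - freq u v x r₀)
            + r / 3 * wint 3 (pot u v) x r / wint 2 (usq u v) x r := by
        rw [hα, show freq u v x r = r ^ 2 * wint 3 (edens u v) x r / wint 2 (usq u v) x r from rfl]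
        field_simp; ring
      rw [e]
      have : 0 ≤ freq u v x r - freq u v x r₀ := sub_nonneg.2 hm
      positivity
  have hK : 0 < 4 * C₀ ^ 2 * cw n := by
    have := h.hC₀; have := cw_pos n; positivity
  set K := Real.log (4 * C₀ ^ 2 * cw n) - (Real.log (wint 2 (usq u v) x r₀) - α * Real.log r₀)
  have hbd : ∀ r : ℝ, r₀ ≤ r → 1 + ‖x‖ ≤ r → (α - 2) * Real.log r ≤ K := by
    intro r h1 h2
    have hm := hmono (mem_Ici.2 le_rfl) (mem_Ici.2 h1) h1
    have hr0 : 0 < r := hr₀.trans_le h1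
    have h3 := Real.log_le_log (h.height_pos x r) (h.height_le x h2)
    rw [Real.log_mul hK.ne' (by positivity), Real.log_pow] at h3
    simp only [Nat.cast_ofNat] at h3 hm
    linarith
  have ht : Filter.Tendsto (fun r => (α - 2) * Real.log r) Filter.atTop Filter.atTop :=
    Real.tendsto_log_atTop.const_mul_atTop (by linarith)
  obtain ⟨r, h1, h2, h3⟩ := ((ht.eventually_gt_atTop K).and
    ((Filter.eventually_ge_atTop r₀).and (Filter.eventually_ge_atTop (1 + ‖x‖)))).exists
  exact absurd (hbd r h2 h3) (not_le.2 h1)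

/-- Up to the factor `e`, the quotient `a(x, r) / r²` is nonincreasing in `r`. The term
`∫ u² v²` in the derivative of `log a` is absorbed by the derivative of the frequency, whose total
variation is at most `6`. -/
lemma IsSol.doubling (h : IsSol u v C₀) (x : Euc n) {r s : ℝ} (hr : 0 < r) (hrs : r ≤ s) :
    wint 2 (usq u v) x s / s ^ 2 ≤ Real.exp 1 * (wint 2 (usq u v) x r / r ^ 2) := by
  have hs : 0 < s := hr.trans_le hrs
  have hanti : AntitoneOn
      (fun r => Real.log (wint 2 (usq u v) x r) - 2 * Real.log r - freq u v x r / 6) (Ioi 0) := by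
    have hder : ∀ r : ℝ, 0 < r → ∃ D, HasDerivAt
        (fun r => Real.log (wint 2 (usq u v) x r) - 2 * Real.log r - freq u v x r / 6) D r
          ∧ D ≤ 0 := by
      intro r hr
      obtain ⟨N', hN, hle⟩ := h.hasDerivAt_freq x hr
      refine ⟨_, ((h.hasDerivAt_log_height x r).sub
        ((Real.hasDerivAt_log hr.ne').const_mul 2)).sub (hN.div_const 6), ?_⟩
      have hpos := h.height_pos x r
      have hf := h.freq_le x hr
      have e : r * (r / 3 * (wint 3 (edens u v) x r + wint 3 (pot u v) x r)
          / wint 2 (usq u v) x r - 2 * r⁻¹ - N' / 6) = freq u v x r / 3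
            + (r ^ 2 * wint 3 (pot u v) x r / wint 2 (usq u v) x r) / 3 - 2 - (r * N') / 6 := by
        rw [freq]; field_simp
      by_contra! hc
      have := mul_pos hr hc
      rw [e] at this
      linarith
    refine antitoneOn_of_deriv_nonpos (convex_Ioi 0) ?_ ?_ ?_
    · intro r hr
      obtain ⟨D, hD, -⟩ := hder r hr
      exact hD.continuousAt.continuousWithinAt
    · intro r hr
      rw [interior_Ioi] at hr
      obtain ⟨D, hD, -⟩ := hder r hr
      exact hD.differentiableAt.differentiableWithinAt
    · intro r hr
      rw [interior_Ioi] at hr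
      obtain ⟨D, hD, hle⟩ := hder r hr
      rwa [hD.deriv]
  have h1 := hanti (mem_Ioi.2 hr) (mem_Ioi.2 hs) hrs
  simp only at h1
  have h2 := h.freq_le x hs
  have h3 := freq_nonneg h x r
  have ha := h.height_pos x r
  have hb := h.height_pos x s
  rw [← Real.log_le_log_iff (by positivity) (by positivity), Real.log_mul (by positivity)
    (by positivity), Real.log_exp, Real.log_div hb.ne' (by positivity), Real.log_div ha.ne'
    (by positivity), Real.log_pow, Real.log_pow]
  push_cast
  linarith

/-- The constant in `IsSol.sup_bound`. -/
noncomputable def csup (n : ℕ) : ℝ := 32 * Real.exp 1 * 4 ^ n / cw n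

lemma csup_pos (n : ℕ) : 0 < csup n := by
  have := cw_pos n; unfold csup; positivity

/-- The mean value inequality for the subharmonic function `u² + v²`, combined with doubling. -/
lemma IsSol.sup_bound (h : IsSol u v C₀) {x z : Euc n} {r : ℝ} (hr : 0 < r) (hz : ‖z - x‖ ≤ r) :
    usq u v z ≤ csup n * wint 2 (usq u v) x r := by
  have hc := cw_pos n
  have h1 := mean_value h.smooth_usq h.lap_usq_nonneg z hr.le
  have h2 := wint_compare h.smooth_usq.continuous (fun y => (h.usq_pos y).le) (x := x) (z := z)
    (R := 4 * r) hr (by positivity) (by linarith)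
  have h3 := h.doubling x hr (by linarith : r ≤ 4 * r)
  rw [mul_div_cancel_right₀ _ hr.ne'] at h2
  rw [← mul_div_assoc, div_le_div_iff₀ (by positivity) (by positivity)] at h3
  have h4 : wint 2 (usq u v) x (4 * r) ≤ 16 * Real.exp 1 * wint 2 (usq u v) x r := by
    have h5 : wint 2 (usq u v) x (4 * r) * r ^ 2
        ≤ 16 * Real.exp 1 * wint 2 (usq u v) x r * r ^ 2 := by linarith
    exact le_of_mul_le_mul_right h5 (by positivity)
  rw [csup, div_mul_eq_mul_div, le_div_iff₀ hc]
  calc usq u v z * cw n ≤ 2 * 4 ^ n * wint 2 (usq u v) x (4 * r) := h1.trans h2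
    _ ≤ 2 * 4 ^ n * (16 * Real.exp 1 * wint 2 (usq u v) x r) := by gcongr
    _ = _ := by ring

end

/-! ### Growth at transition points -/

section
variable {n : ℕ} {u v : Euc n → ℝ} {C₀ : ℝ}

/-- A Grönwall inequality for weighted averages. -/
lemma wint_gronwall {w : Euc n → ℝ} (hw : Smooth w) (hpos : ∀ z, 0 ≤ w z) {x : Euc n} {r K : ℝ}
    (hr : 0 ≤ r) (hK : 0 ≤ K) (hl : ∀ z, ‖z - x‖ ≤ r → lap w z ≤ K * w z) :
    wint 2 w x r ≤ Real.exp (K * r ^ 2 / 12) * (w x * cw n) := by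
  have hder : ∀ s : ℝ, HasDerivAt (fun s => wint 2 w x s * Real.exp (-(K * s ^ 2 / 12)))
      (s / 6 * wint 3 (lap w) x s * Real.exp (-(K * s ^ 2 / 12))
        + wint 2 w x s * (Real.exp (-(K * s ^ 2 / 12)) * -(K * (2 * s) / 12))) s := by
    intro s
    have h1 : HasDerivAt (fun s : ℝ => -(K * s ^ 2 / 12)) (-(K * (2 * s) / 12)) s := by
      simpa using (((hasDerivAt_pow 2 s).const_mul K).div_const 12).fun_neg
    exact (hasDerivAt_wint_two hw x s).mul h1.exp
  have hanti : AntitoneOn (fun s => wint 2 w x s * Real.exp (-(K * s ^ 2 / 12))) (Icc 0 r) := by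
    refine antitoneOn_of_deriv_nonpos (convex_Icc 0 r)
      (fun s _ => (hder s).continuousAt.continuousWithinAt)
      (fun s _ => (hder s).differentiableAt.differentiableWithinAt) fun s hs => ?_
    rw [interior_Icc] at hs
    rw [(hder s).deriv]
    have h1 : wint 3 (lap w) x s ≤ K * wint 2 w x s := by
      have h2 := wint_mono (k := 3) (g := fun z => K * w z) (by norm_num) hw.lap.continuous
        (continuous_const.mul hw.continuous) x hs.1.le
        (fun z hz => hl z (hz.trans hs.2.le))
      rw [wint_const_mul] at h2
      exact h2.trans (mul_le_mul_of_nonneg_left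
        (wint_three_le_two hw.continuous hpos x s) hK)
    have e : s / 6 * wint 3 (lap w) x s * Real.exp (-(K * s ^ 2 / 12))
        + wint 2 w x s * (Real.exp (-(K * s ^ 2 / 12)) * -(K * (2 * s) / 12))
        = s / 6 * Real.exp (-(K * s ^ 2 / 12)) * (wint 3 (lap w) x s - K * wint 2 w x s) := by
      ring
    rw [e]
    have := hs.1
    exact mul_nonpos_of_nonneg_of_nonpos (by positivity) (by linarith)
  have h1 := hanti (left_mem_Icc.2 hr) (right_mem_Icc.2 hr) hr
  simp only [wint_zero] at h1
  norm_num at h1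
  rw [Real.exp_neg, ← div_eq_mul_inv, div_le_iff₀ (Real.exp_pos _)] at h1
  linarith

/-- The constant in `IsSol.small_ball`. -/
noncomputable def csm (n : ℕ) : ℝ := 2 * 4 ^ n * Real.exp (csup n / 12)

/-- A Harnack bound from above: at the scale where `r² a(x, r) = 1`, the equation reads
`Δu ≤ C r⁻² u` on `B_r(x)`, so nearby values of `u` are controlled by `u x`. -/
lemma IsSol.small_ball (h : IsSol u v C₀) {x z : Euc n} {r T : ℝ} (hr : 0 < r)
    (hra : r ^ 2 * wint 2 (usq u v) x r = 1) (hx : u x ≤ T) (hz : ‖z - x‖ ≤ r / 4) :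
    u z ≤ csm n * T := by
  have hc := cw_pos n
  have hcs := csup_pos n
  have hK : 0 ≤ csup n * wint 2 (usq u v) x r := (mul_pos hcs (h.height_pos x r)).le
  have h1 := wint_gronwall h.hu (fun z => (h.hupos z).le) hr.le hK (x := x) (fun z hz => by
    rw [h.hequ, mul_comm]
    refine mul_le_mul_of_nonneg_right ((le_add_of_nonneg_left (sq_nonneg (u z))).trans
      (h.sup_bound hr hz)) (h.hupos z).le)
  have e : csup n * wint 2 (usq u v) x r * r ^ 2 / 12 = csup n / 12 := by
    rw [mul_assoc, mul_comm (wint _ _ _ _), hra, mul_one]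
  rw [e] at h1
  have h2 := mean_value h.hu h.lap_u_nonneg z (r := r / 4) (by positivity)
  have h3 := wint_compare h.hu.continuous (fun z => (h.hupos z).le) (x := x) (z := z)
    (r := r / 4) (R := r) (by positivity) hr (by linarith)
  rw [show r / (r / 4) = 4 by field_simp] at h3
  refine le_of_mul_le_mul_right ?_ hc
  calc u z * cw n ≤ 2 * 4 ^ n * wint 2 u x r := h2.trans h3
    _ ≤ 2 * 4 ^ n * (Real.exp (csup n / 12) * (T * cw n)) := by
      refine mul_le_mul_of_nonneg_left (h1.trans ?_) (by positivity)
      gcongr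
    _ = csm n * T * cw n := by rw [csm]; ring

lemma usq_swap : usq v u = usq u v := by
  ext z; simp only [usq]; ring

/-- At a point where both components are at most `T`, the height at scale one is controlled by
`T`. If the height were large, then rescaling at the scale `r` with `r² a(x, r) = 1` the
Harnack inequality would bound it by the value at `x`. -/
lemma IsSol.transition_upper (h : IsSol u v C₀) (T : ℝ) :
    ∃ Q : ℝ, 1 ≤ Q ∧ ∀ x, u x ≤ T → v x ≤ T → wint 2 (usq u v) x 1 ≤ Q := by
  set M : ℝ := 16 * Real.exp 1 * (2 * (csm n * T) ^ 2 * cw n) with hM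
  refine ⟨max 1 (Real.exp 1 * M ^ 2), le_max_left _ _, fun x hux hvx => ?_⟩
  rcases le_or_gt (wint 2 (usq u v) x 1) 1 with h1 | h1
  · exact h1.trans (le_max_left _ _)
  refine le_trans ?_ (le_max_right _ _)
  have hcont : ContinuousOn (fun r : ℝ => r ^ 2 * wint 2 (usq u v) x r) (Icc 0 1) := fun r _ =>
    ((continuous_pow 2).continuousAt.mul
      (h.hasDerivAt_height x r).continuousAt).continuousWithinAt
  obtain ⟨r, hr, hra⟩ := intermediate_value_Icc zero_le_one hcont
    (show (1 : ℝ) ∈ Icc _ _ by constructor <;> norm_num; exact h1.le)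
  simp only at hra
  have hr0 : 0 < r := by
    rcases hr.1.eq_or_lt with h0 | h0
    · rw [← h0] at hra; norm_num at hra
    · exact h0
  have ha : wint 2 (usq u v) x (r / 4) ≤ 2 * (csm n * T) ^ 2 * cw n := by
    rw [← wint_const _ x (r / 4)]
    refine wint_mono (by norm_num) h.smooth_usq.continuous continuous_const x (by positivity) ?_
    intro z hz
    have h2 := h.small_ball hr0 hra hux hz
    have h3 := h.swap.small_ball hr0 (by rw [usq_swap]; exact hra) hvx hz
    have h4 := h.hupos z
    have h5 := h.hvpos z
    unfold usq
    nlinarith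
  have h2 := h.doubling x (by positivity : 0 < r / 4) (by linarith : r / 4 ≤ r)
  have h3 : wint 2 (usq u v) x r ≤ M := by
    have e : Real.exp 1 * (wint 2 (usq u v) x (r / 4) / (r / 4) ^ 2)
        = 16 * Real.exp 1 * wint 2 (usq u v) x (r / 4) / r ^ 2 := by field_simp; ring
    rw [e] at h2
    refine ((div_le_div_iff_of_pos_right (by positivity)).1 h2).trans ?_
    rw [hM]; gcongr
  have h4 := h.doubling x hr0 hr.2
  have h5 : wint 2 (usq u v) x r / r ^ 2 = wint 2 (usq u v) x r ^ 2 := by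
    rw [div_eq_iff (by positivity)]
    calc _ = wint 2 (usq u v) x r * (r ^ 2 * wint 2 (usq u v) x r) := by rw [hra, mul_one]
      _ = _ := by ring
  rw [h5] at h4
  have h6 := h.height_pos x r
  calc wint 2 (usq u v) x 1 ≤ Real.exp 1 * wint 2 (usq u v) x r ^ 2 := by simpa using h4
    _ ≤ _ := by gcongr

end

/-! ### A Liouville theorem: a two-point maximum principle -/

/-- The necessary second order condition at a local maximum. -/
lemma second_deriv_nonpos {f f₁ : ℝ → ℝ} {f₂ : ℝ} (h1 : ∀ᶠ t in nhds 0, HasDerivAt f (f₁ t) t)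
    (h2 : HasDerivAt f₁ f₂ 0) (hmax : IsLocalMax f 0) : f₂ ≤ 0 := by
  by_contra! hpos
  have hd : deriv f =ᶠ[nhds 0] f₁ := h1.mono fun t ht => ht.deriv
  have hdd : deriv (deriv f) 0 = f₂ := by rw [hd.deriv_eq, h2.deriv]
  have hmin := isLocalMin_of_deriv_deriv_pos (by rw [hdd]; exact hpos) hmax.deriv_eq_zero
    h1.self_of_nhds.continuousAt
  -- a point which is both a local maximum and a local minimum is a point of local constancy
  have hconst : f =ᶠ[nhds 0] fun _ => f 0 := by
    filter_upwards [hmax, hmin] with t ha hb using le_antisymm ha hb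
  have h3 : deriv f =ᶠ[nhds 0] fun _ => 0 := by
    simpa using hconst.deriv
  have h4 : deriv (deriv f) 0 = 0 := by rw [h3.deriv_eq]; simp
  rw [hdd] at h4
  exact hpos.ne' h4

/-- A one-sided first order condition. -/
lemma deriv_nonneg_of_right {g : ℝ → ℝ} {D : ℝ} (h : HasDerivAt g D 0) (h0 : g 0 = 0)
    (hg : ∀ t : ℝ, 0 < t → 0 ≤ g t) : 0 ≤ D := by
  refine ge_of_tendsto h.tendsto_slope_zero_right ?_
  filter_upwards [self_mem_nhdsWithin] with t ht
  have ht : 0 < t := ht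
  have := hg t ht
  simp only [zero_add, h0, sub_zero, smul_eq_mul]
  positivity

section
variable {n : ℕ} {u v : Euc n → ℝ} {C₀ : ℝ}

/-- The second derivative of `w` at `x` in direction `ξ`. -/
noncomputable def hess (w : Euc n → ℝ) (x ξ : Euc n) : ℝ := fderiv ℝ (fun z => fderiv ℝ w z ξ) x ξ

lemma Smooth.dir {w : Euc n → ℝ} (hw : Smooth w) (ξ : Euc n) :
    Smooth fun z => fderiv ℝ w z ξ := by
  have h : ContDiff ℝ (⊤ : ℕ∞) (fderiv ℝ w) := hw.fderiv_right (by norm_cast)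
  exact h.clm_apply contDiff_const

lemma hess_eq {w : Euc n → ℝ} (hw : Smooth w) (x ξ : Euc n) :
    hess w x ξ = ∑ k, ∑ j, ξ k * ξ j * pd j (pd k w) x := by
  have h1 : (fun z => fderiv ℝ w z ξ) = fun z => ∑ k, ξ k * pd k w z :=
    funext fun z => fderiv_eq_sum w z ξ
  rw [hess, h1, fderiv_fun_sum fun k _ => ((hw.pd k).diff x).const_mul _]
  simp only [sum_apply]
  refine Finset.sum_congr rfl fun k _ => ?_
  rw [fderiv_const_mul ((hw.pd k).diff x)]
  simp only [smul_apply, smul_eq_mul]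
  rw [fderiv_eq_sum, Finset.mul_sum]
  exact Finset.sum_congr rfl fun j _ => by ring

lemma hasDerivAt_log_line {w : Euc n → ℝ} (hw : Smooth w) (hpos : ∀ z, 0 < w z) (x ξ : Euc n)
    (t : ℝ) : HasDerivAt (fun s : ℝ => Real.log (w (x + s • ξ)))
      (fderiv ℝ w (x + t • ξ) ξ / w (x + t • ξ)) t :=
  (hasDerivAt_line hw x ξ t).log (hpos _).ne'

lemma hasDerivAt_log_line_two {w : Euc n → ℝ} (hw : Smooth w) (hpos : ∀ z, 0 < w z)
    (x ξ : Euc n) : HasDerivAt (fun t : ℝ => fderiv ℝ w (x + t • ξ) ξ / w (x + t • ξ))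
      (hess w x ξ / w x - (fderiv ℝ w x ξ / w x) ^ 2) 0 := by
  have h := (hasDerivAt_line (hw.dir ξ) x ξ 0).div (hasDerivAt_line hw x ξ 0) (hpos _).ne'
  refine h.congr_deriv ?_
  have := (hpos x).ne'
  simp only [zero_smul, add_zero, hess]
  field_simp

/-- The second order condition for `log u (x) + log v (y)` along the line
`t ↦ (x + t ξ, y + t η)` when it is touched from above by `G`. -/
lemma second_order (h : IsSol u v C₀) {x y ξ η : Euc n} {G G₁ : ℝ → ℝ} {G₂ : ℝ}
    (h1 : ∀ᶠ t in nhds 0, HasDerivAt G (G₁ t) t) (h2 : HasDerivAt G₁ G₂ 0)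
    (hle : ∀ᶠ t in nhds (0 : ℝ), Real.log (u (x + t • ξ)) + Real.log (v (y + t • η)) - G t
      ≤ Real.log (u x) + Real.log (v y) - G 0) :
    hess u x ξ / u x - (fderiv ℝ u x ξ / u x) ^ 2
      + (hess v y η / v y - (fderiv ℝ v y η / v y) ^ 2) ≤ G₂ := by
  have := second_deriv_nonpos
    (f := fun t => Real.log (u (x + t • ξ)) + Real.log (v (y + t • η)) - G t)
    (h1.mono fun t ht => ((hasDerivAt_log_line h.hu h.hupos x ξ t).add
      (hasDerivAt_log_line h.hv h.hvpos y η t)).sub ht)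
    (((hasDerivAt_log_line_two h.hu h.hupos x ξ).add
      (hasDerivAt_log_line_two h.hv h.hvpos y η)).sub h2)
    (by filter_upwards [hle] with t ht; simpa using ht)
  linarith

/-- The image of the `i`-th basis vector under the reflection in the hyperplane orthogonal
to `e`. -/
noncomputable def rfv (e : Euc n) (i : Fin n) : Euc n :=
  EuclideanSpace.single i 1 - (2 * e i) • e

lemma norm_sq_eq_sum (e : Euc n) : ‖e‖ ^ 2 = ∑ i, e i ^ 2 := by
  rw [EuclideanSpace.norm_sq_eq]; simp

lemma rfv_apply (e : Euc n) (i j : Fin n) :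
    rfv e i j = (if j = i then 1 else 0) - 2 * e i * e j := by
  simp [rfv]

lemma sum_rfv {e : Euc n} (he : ‖e‖ = 1) (j k : Fin n) :
    ∑ i, rfv e i j * rfv e i k = if j = k then 1 else 0 := by
  have h1 : ∑ i, e i ^ 2 = 1 := by rw [← norm_sq_eq_sum, he]; norm_num
  have : ∀ i, rfv e i j * rfv e i k = (if j = i then (if k = i then 1 else 0) else 0)
      - (if j = i then 2 * e i * e k else 0) - (if k = i then 2 * e i * e j else 0)
      + 4 * e j * e k * e i ^ 2 := by
    intro i
    rw [rfv_apply, rfv_apply]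
    split_ifs <;> ring
  rw [Finset.sum_congr rfl fun i _ => this i, Finset.sum_add_distrib, Finset.sum_sub_distrib,
    Finset.sum_sub_distrib, ← Finset.mul_sum, h1]
  simp only [Finset.sum_ite_eq, Finset.mem_univ, if_true, eq_comm (a := k) (b := j)]
  ring

lemma norm_rfv {e : Euc n} (he : ‖e‖ = 1) (i : Fin n) : ‖rfv e i‖ = 1 := by
  have h1 : ∑ i, e i ^ 2 = 1 := by rw [← norm_sq_eq_sum, he]; norm_num
  have h2 : ‖rfv e i‖ ^ 2 = 1 := by
    rw [norm_sq_eq_sum]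
    have : ∀ j, rfv e i j ^ 2 = (if j = i then 1 - 4 * e i * e j else 0)
        + 4 * e i ^ 2 * e j ^ 2 := by
      intro j
      rw [rfv_apply]
      split_ifs <;> ring
    rw [Finset.sum_congr rfl fun j _ => this j, Finset.sum_add_distrib, ← Finset.mul_sum, h1]
    simp
    ring
  nlinarith [norm_nonneg (rfv e i)]

lemma sum_quad_rfv {e : Euc n} (he : ‖e‖ = 1) (M : Fin n → Fin n → ℝ) :
    ∑ i, ∑ k, ∑ j, rfv e i k * rfv e i j * M j k = ∑ k, M k k := by
  rw [Finset.sum_comm]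
  refine Finset.sum_congr rfl fun k _ => ?_
  rw [Finset.sum_comm]
  have : ∀ j, ∑ i, rfv e i k * rfv e i j * M j k = if k = j then M j k else 0 := by
    intro j
    rw [← Finset.sum_mul, sum_rfv he]
    split_ifs <;> simp
  rw [Finset.sum_congr rfl fun j _ => this j]
  simp

lemma sum_hess_rfv {w : Euc n → ℝ} (hw : Smooth w) {e : Euc n} (he : ‖e‖ = 1) (x : Euc n) :
    ∑ i, hess w x (rfv e i) = lap w x := by
  simp only [hess_eq hw, lap_eq]
  exact sum_quad_rfv he fun j k => pd j (pd k w) x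

lemma sum_fderiv_rfv {w : Euc n → ℝ} {e : Euc n} (he : ‖e‖ = 1) (x : Euc n) :
    ∑ i, fderiv ℝ w x (rfv e i) ^ 2 = gsq w x := by
  rw [gsq]
  simp only [pow_two]
  rw [← sum_quad_rfv he fun j k => pd j w x * pd k w x]
  refine Finset.sum_congr rfl fun i _ => ?_
  rw [fderiv_eq_sum, Finset.sum_mul_sum]
  exact Finset.sum_congr rfl fun j _ => Finset.sum_congr rfl fun k _ => by ring

/-- The concave modulus `ψ(ρ) = a + ∫₀^ρ exp (-2 δ s) ds`. -/
noncomputable def psi (δ a ρ : ℝ) : ℝ := a + (1 - Real.exp (-(2 * δ * ρ))) / (2 * δ)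

lemma le_psi {δ a ρ : ℝ} (hδ : 0 < δ) (hρ : 0 ≤ ρ) : a ≤ psi δ a ρ := by
  have h : Real.exp (-(2 * δ * ρ)) ≤ 1 := Real.exp_le_one_iff.2 (by simp; positivity)
  have : 0 ≤ (1 - Real.exp (-(2 * δ * ρ))) / (2 * δ) := div_nonneg (by linarith) (by positivity)
  unfold psi; linarith

lemma psi_mono {δ a ρ ρ' : ℝ} (hδ : 0 < δ) (h : ρ ≤ ρ') : psi δ a ρ ≤ psi δ a ρ' := by
  unfold psi; gcongr

lemma hasDerivAt_exp_psi (δ ρ : ℝ) : HasDerivAt (fun ρ => Real.exp (-(2 * δ * ρ)))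
    (-(2 * δ * Real.exp (-(2 * δ * ρ)))) ρ := by
  have h1 : HasDerivAt (fun ρ : ℝ => -(2 * δ * ρ)) (-(2 * δ)) ρ := by
    simpa using ((hasDerivAt_id ρ).const_mul (2 * δ)).fun_neg
  convert h1.exp using 1; ring

lemma hasDerivAt_psi {δ : ℝ} (hδ : 0 < δ) (a ρ : ℝ) :
    HasDerivAt (psi δ a) (Real.exp (-(2 * δ * ρ))) ρ := by
  have := (((hasDerivAt_exp_psi δ ρ).const_sub 1).div_const (2 * δ)).const_add a
  refine this.congr_deriv ?_
  field_simp

lemma hasDerivAt_log_psi {δ a ρ : ℝ} (hδ : 0 < δ) (h : 0 < psi δ a ρ) :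
    HasDerivAt (fun ρ => 2 * Real.log (psi δ a ρ))
      (2 * (Real.exp (-(2 * δ * ρ)) / psi δ a ρ)) ρ :=
  ((hasDerivAt_psi hδ a ρ).log h.ne').const_mul 2

lemma hasDerivAt_log_psi_two {δ a ρ : ℝ} (hδ : 0 < δ) (h : 0 < psi δ a ρ) :
    HasDerivAt (fun ρ => 2 * (Real.exp (-(2 * δ * ρ)) / psi δ a ρ))
      (-(4 * δ * (Real.exp (-(2 * δ * ρ)) / psi δ a ρ))
        - 2 * (Real.exp (-(2 * δ * ρ)) / psi δ a ρ) ^ 2) ρ := by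
  refine (((hasDerivAt_exp_psi δ ρ).fun_div (hasDerivAt_psi hδ a ρ) h.ne').const_mul 2).congr_deriv ?_
  field_simp; ring

/-- The localising weight `√(1 + δ² |x|²)`. -/
noncomputable def qf (δ : ℝ) (x : Euc n) : ℝ := Real.sqrt (1 + δ ^ 2 * ‖x‖ ^ 2)

lemma qf_sq (δ : ℝ) (x : Euc n) : qf δ x ^ 2 = 1 + δ ^ 2 * ‖x‖ ^ 2 :=
  Real.sq_sqrt (by positivity)

lemma one_le_qf (δ : ℝ) (x : Euc n) : 1 ≤ qf δ x :=
  Real.one_le_sqrt.2 (by nlinarith [sq_nonneg (δ * ‖x‖)])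

lemma le_qf {δ : ℝ} (x : Euc n) : δ * ‖x‖ ≤ qf δ x :=
  Real.le_sqrt_of_sq_le (by nlinarith)

/-- A quadratic function of `t` touching `qf δ (x + t ξ)` from above at `t = 0`. -/
noncomputable def qquad (δ : ℝ) (x ξ : Euc n) (t : ℝ) : ℝ :=
  qf δ x + (δ ^ 2 * (2 * t * ⟪x, ξ⟫ + t ^ 2 * ‖ξ‖ ^ 2)) / (2 * qf δ x)

lemma qf_le_qquad (δ : ℝ) (x ξ : Euc n) (t : ℝ) : qf δ (x + t • ξ) ≤ qquad δ x ξ t := by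
  have h1 := one_le_qf δ x
  have h2 := qf_sq δ x
  have h3 := qf_sq δ (x + t • ξ)
  have h4 : ‖x + t • ξ‖ ^ 2 = ‖x‖ ^ 2 + (2 * t * ⟪x, ξ⟫ + t ^ 2 * ‖ξ‖ ^ 2) := by
    rw [norm_add_sq_real, inner_smul_right, norm_smul, mul_pow, Real.norm_eq_abs, sq_abs]; ring
  rw [h4] at h3
  have e : δ ^ 2 * (2 * t * ⟪x, ξ⟫ + t ^ 2 * ‖ξ‖ ^ 2) = qf δ (x + t • ξ) ^ 2 - qf δ x ^ 2 := by
    linarith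
  rw [qquad, e, ← sub_nonneg]
  have : qf δ x + (qf δ (x + t • ξ) ^ 2 - qf δ x ^ 2) / (2 * qf δ x) - qf δ (x + t • ξ)
      = (qf δ (x + t • ξ) - qf δ x) ^ 2 / (2 * qf δ x) := by
    field_simp; ring
  rw [this]; positivity

lemma qquad_zero (δ : ℝ) (x ξ : Euc n) : qquad δ x ξ 0 = qf δ x := by simp [qquad]

lemma hasDerivAt_qquad (δ : ℝ) (x ξ : Euc n) (t : ℝ) : HasDerivAt (qquad δ x ξ)
    (δ ^ 2 / qf δ x * (⟪x, ξ⟫ + t * ‖ξ‖ ^ 2)) t := by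
  have h1 := one_le_qf δ x
  have := ((((((hasDerivAt_id t).const_mul 2).mul_const ⟪x, ξ⟫).fun_add
    ((hasDerivAt_pow 2 t).mul_const (‖ξ‖ ^ 2))).const_mul (δ ^ 2)).div_const
    (2 * qf δ x)).const_add (qf δ x)
  refine this.congr_deriv ?_
  push_cast
  field_simp

lemma hasDerivAt_qquad_two (δ : ℝ) (x ξ : Euc n) (t : ℝ) :
    HasDerivAt (fun t => δ ^ 2 / qf δ x * (⟪x, ξ⟫ + t * ‖ξ‖ ^ 2))
      (δ ^ 2 / qf δ x * ‖ξ‖ ^ 2) t := by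
  simpa using (((hasDerivAt_id t).mul_const (‖ξ‖ ^ 2)).const_add ⟪x, ξ⟫).const_mul
    (δ ^ 2 / qf δ x)

lemma qquad_deriv_le {δ : ℝ} (hδ : 0 < δ) (x ξ : Euc n) :
    δ ^ 2 / qf δ x * ⟪x, ξ⟫ ≤ δ * ‖ξ‖ := by
  have h1 := one_le_qf δ x
  rw [div_mul_eq_mul_div, div_le_iff₀ (by linarith)]
  calc δ ^ 2 * ⟪x, ξ⟫ ≤ δ ^ 2 * (‖x‖ * ‖ξ‖) := by gcongr; exact real_inner_le_norm x ξ
    _ = δ * ‖ξ‖ * (δ * ‖x‖) := by ring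
    _ ≤ δ * ‖ξ‖ * qf δ x := by gcongr; exact le_qf x

end

/-! ### The two-point function -/

section
variable {n : ℕ} {u v : Euc n → ℝ} {C₀ : ℝ}

/-- The two-point function to be maximised over `(x, y)`. -/
noncomputable def twoPt (u v : Euc n → ℝ) (δ a : ℝ) (x y : Euc n) : ℝ :=
  Real.log (u x) + Real.log (v y) - 2 * Real.log (psi δ a ‖x - y‖) - qf δ x - qf δ y

lemma twoPt_swap (δ a : ℝ) (x y : Euc n) : twoPt v u δ a y x = twoPt u v δ a x y := by
  unfold twoPt; rw [norm_sub_rev]; ring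

lemma log_sub_qf_le {w : Euc n → ℝ} (hw : ∀ z, 0 < w z) {A ε δ : ℝ} (hA : 0 < A) (hε : 0 < ε)
    (hδ : 0 < δ) (hle : ∀ z, w z ≤ A + ε * ‖z‖) (z : Euc n) :
    Real.log (w z) - qf δ z ≤ Real.log (A + ε / δ) - qf δ z / 2 := by
  have h1 := one_le_qf δ z
  have h2 := le_qf (δ := δ) z
  have h3 : w z ≤ (A + ε / δ) * qf δ z := by
    have : ε * ‖z‖ = ε / δ * (δ * ‖z‖) := by field_simp
    have h4 : ε / δ * (δ * ‖z‖) ≤ ε / δ * qf δ z := by gcongr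
    have h5 : A * 1 ≤ A * qf δ z := by gcongr
    linarith [hle z]
  have h4 := Real.log_le_log (hw z) h3
  rw [Real.log_mul (by positivity) (by positivity)] at h4
  have h5 : Real.log (qf δ z) ≤ qf δ z / 2 := by
    have h6 := Real.log_le_sub_one_of_pos (by positivity : 0 < qf δ z / 2)
    rw [Real.log_div (by positivity) (by norm_num)] at h6
    have := Real.log_two_lt_d9
    linarith
  linarith

/-- The localising terms beat the logarithmic growth, so the two-point function attains its
maximum. -/
lemma exists_twoPt_max (h : IsSol u v C₀) {A ε δ a : ℝ} (hA : 0 < A) (hε : 0 < ε) (hδ : 0 < δ)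
    (ha : 0 < a) (hle : ∀ z, u z + v z ≤ A + ε * ‖z‖) :
    ∃ x₀ y₀, ∀ x y, twoPt u v δ a x y ≤ twoPt u v δ a x₀ y₀ := by
  have hcont : Continuous fun p : Euc n × Euc n => twoPt u v δ a p.1 p.2 := by
    have h1 : Continuous fun p : Euc n × Euc n => psi δ a ‖p.1 - p.2‖ := by
      have : Continuous (psi δ a) := continuous_iff_continuousAt.2 fun ρ =>
        (hasDerivAt_psi hδ a ρ).continuousAt
      exact this.comp (by fun_prop)
    have h2 : Continuous fun p : Euc n × Euc n => Real.log (psi δ a ‖p.1 - p.2‖) :=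
      h1.log fun p => (ha.trans_le (le_psi hδ (norm_nonneg _))).ne'
    have h3 : Continuous fun p : Euc n × Euc n => Real.log (u p.1) :=
      (h.hu.continuous.comp continuous_fst).log fun p => (h.hupos _).ne'
    have h4 : Continuous fun p : Euc n × Euc n => Real.log (v p.2) :=
      (h.hv.continuous.comp continuous_snd).log fun p => (h.hvpos _).ne'
    unfold twoPt qf
    fun_prop
  have hbd : ∀ p : Euc n × Euc n, twoPt u v δ a p.1 p.2
      ≤ 2 * Real.log (A + ε / δ) - 2 * Real.log a - δ / 2 * ‖p‖ := by
    intro p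
    have h1 := log_sub_qf_le h.hupos hA hε hδ
      (fun z => by linarith [hle z, h.hvpos z]) p.1
    have h2 := log_sub_qf_le h.hvpos hA hε hδ
      (fun z => by linarith [hle z, h.hupos z]) p.2
    have h3 := Real.log_le_log ha (le_psi (a := a) hδ (norm_nonneg (p.1 - p.2)))
    have h4 := le_qf (δ := δ) p.1
    have h5 := le_qf (δ := δ) p.2
    have h6 : δ * ‖p‖ ≤ δ * ‖p.1‖ + δ * ‖p.2‖ := by
      rw [← mul_add]
      gcongr
      rw [Prod.norm_def]
      exact max_le (by linarith [norm_nonneg p.2]) (by linarith [norm_nonneg p.1])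
    unfold twoPt
    linarith
  obtain ⟨p, hp⟩ := hcont.exists_forall_ge' (0 : Euc n × Euc n) (by
    have ht : Filter.Tendsto (fun p : Euc n × Euc n => δ / 2 * ‖p‖)
        (Filter.cocompact (Euc n × Euc n)) Filter.atTop :=
      tendsto_norm_cocompact_atTop.const_mul_atTop (by positivity)
    filter_upwards [ht.eventually_ge_atTop (2 * Real.log (A + ε / δ) - 2 * Real.log a
      - twoPt u v δ a (0 : Euc n × Euc n).1 (0 : Euc n × Euc n).2)] with p hp
    have := hbd p
    linarith)
  exact ⟨p.1, p.2, fun x y => hp (x, y)⟩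

/-- The first order condition at a maximum of the two-point function. -/
lemma twoPt_grad (h : IsSol u v C₀) {δ a : ℝ} (hδ : 0 < δ) (ha : 0 < a) {x₀ y₀ : Euc n}
    (hmax : ∀ x y, twoPt u v δ a x y ≤ twoPt u v δ a x₀ y₀) :
    gsq u x₀ ≤ ((2 * (Real.exp (-(2 * δ * ‖x₀ - y₀‖)) / psi δ a ‖x₀ - y₀‖) + δ) * u x₀) ^ 2 := by
  set ρ := ‖x₀ - y₀‖ with hρ
  have hρ0 : 0 ≤ ρ := norm_nonneg _
  have hψ : 0 < psi δ a ρ := ha.trans_le (le_psi hδ hρ0)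
  set K := 2 * (Real.exp (-(2 * δ * ρ)) / psi δ a ρ) + δ with hK
  have hK0 : 0 < K := by positivity
  have hu0 := h.hupos x₀
  have key : ∀ ξ : Euc n, fderiv ℝ u x₀ ξ ≤ K * u x₀ * ‖ξ‖ := by
    intro ξ
    have h1 : HasDerivAt (fun t => 2 * Real.log (psi δ a (ρ + t * ‖ξ‖)))
        (2 * (Real.exp (-(2 * δ * ρ)) / psi δ a ρ) * ‖ξ‖) 0 := by
      have hl : HasDerivAt (fun t : ℝ => ρ + t * ‖ξ‖) ‖ξ‖ 0 := by
        simpa using ((hasDerivAt_id (0 : ℝ)).mul_const ‖ξ‖).const_add ρ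
      have hl2 : HasDerivAt (fun ρ => 2 * Real.log (psi δ a ρ))
        (2 * (Real.exp (-(2 * δ * ρ)) / psi δ a ρ)) (ρ + 0 * ‖ξ‖) := by
        rw [zero_mul, add_zero]; exact hasDerivAt_log_psi hδ hψ
      exact HasDerivAt.comp (h₂ := fun ρ => 2 * Real.log (psi δ a ρ)) 0 hl2 hl
    have h2 := hasDerivAt_qquad δ x₀ ξ 0
    have h3 := hasDerivAt_log_line h.hu h.hupos x₀ ξ 0
    have h4 := deriv_nonneg_of_right (((h1.fun_add h2).fun_sub h3).sub_const
      (2 * Real.log (psi δ a ρ) + qf δ x₀ - Real.log (u x₀))) (by simp [qquad_zero]) (by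
        intro t ht
        have hm := hmax (x₀ + t • ξ) y₀
        have hq := qf_le_qquad δ x₀ ξ t
        have hd : ‖x₀ + t • ξ - y₀‖ ≤ ρ + t * ‖ξ‖ := by
          have e : x₀ + t • ξ - y₀ = (x₀ - y₀) + t • ξ := by abel
          rw [e]
          refine (norm_add_le _ _).trans ?_
          rw [norm_smul, Real.norm_eq_abs, abs_of_pos ht]
        have hl := Real.log_le_log (ha.trans_le (le_psi hδ (norm_nonneg (x₀ + t • ξ - y₀))))
          (psi_mono (a := a) hδ hd)
        unfold twoPt at hm
        rw [← hρ] at hm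
        linarith)
    have h5 := qquad_deriv_le hδ x₀ ξ
    simp only [zero_smul, add_zero, zero_mul] at h4
    have h6 : fderiv ℝ u x₀ ξ / u x₀ ≤ K * ‖ξ‖ := by rw [hK]; linarith
    rw [div_le_iff₀ hu0] at h6
    linarith
  set g : Euc n := WithLp.toLp 2 (fun i => pd i u x₀) with hg
  have hg1 : ‖g‖ ^ 2 = gsq u x₀ := by rw [norm_sq_eq_sum]; rfl
  have hg2 : fderiv ℝ u x₀ g = ‖g‖ ^ 2 := by
    rw [fderiv_eq_sum, hg1, gsq]
    exact Finset.sum_congr rfl fun i _ => by rw [hg, pow_two]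
  have h1 := key g
  rw [hg2] at h1
  have h2 : ‖g‖ ≤ K * u x₀ := by
    by_contra! hc
    have : 0 < K * u x₀ := by positivity
    nlinarith
  rw [← hg1]
  gcongr

lemma qquad_second_le {δ : ℝ} (x ξ : Euc n) (hξ : ‖ξ‖ = 1) :
    δ ^ 2 / qf δ x * ‖ξ‖ ^ 2 ≤ δ ^ 2 := by
  rw [hξ, one_pow, mul_one]
  exact div_le_self (sq_nonneg δ) (one_le_qf δ x)

/-- Summing the second order conditions over a frame gives the Laplacians. -/
lemma sum_second_order (h : IsSol u v C₀) {x y : Euc n} {K : ℝ} {η : Fin n → Euc n} {B : Fin n → ℝ}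
    (hη1 : ∑ i, hess v y (η i) = lap v y) (hη2 : ∑ i, fderiv ℝ v y (η i) ^ 2 = gsq v y)
    (hu : gsq u x ≤ (K * u x) ^ 2) (hv : gsq v y ≤ (K * v y) ^ 2)
    (hso : ∀ i, hess u x (EuclideanSpace.single i 1) / u x
      - (fderiv ℝ u x (EuclideanSpace.single i 1) / u x) ^ 2
      + (hess v y (η i) / v y - (fderiv ℝ v y (η i) / v y) ^ 2) ≤ B i) :
    v x ^ 2 + u y ^ 2 ≤ 2 * K ^ 2 + ∑ i, B i := by
  have h1 := Finset.sum_le_sum fun i (_ : i ∈ Finset.univ) => hso i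
  have hux := h.hupos x
  have hvy := h.hvpos y
  have e1 : ∑ i, hess u x (EuclideanSpace.single i 1) = lap u x := rfl
  have e2 : ∑ i, fderiv ℝ u x (EuclideanSpace.single i 1) ^ 2 = gsq u x := rfl
  simp only [div_pow] at h1
  rw [Finset.sum_add_distrib, Finset.sum_sub_distrib, Finset.sum_sub_distrib, ← Finset.sum_div,
    ← Finset.sum_div, ← Finset.sum_div, ← Finset.sum_div, e1, e2, hη1, hη2, h.hequ, h.heqv,
    mul_div_cancel_left₀ _ hux.ne', mul_div_cancel_left₀ _ hvy.ne'] at h1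
  have h2 : gsq u x / u x ^ 2 ≤ K ^ 2 := by
    rw [div_le_iff₀ (by positivity), ← mul_pow]; exact hu
  have h3 : gsq v y / v y ^ 2 ≤ K ^ 2 := by
    rw [div_le_iff₀ (by positivity), ← mul_pow]; exact hv
  linarith

lemma norm_single_one (i : Fin n) : ‖(EuclideanSpace.single i (1 : ℝ) : Euc n)‖ = 1 := by simp

/-- Second order condition at a diagonal maximum, moving both points in parallel. -/
lemma twoPt_diag (h : IsSol u v C₀) {δ a : ℝ} (hδ : 0 < δ) (ha : 0 < a) {x₀ : Euc n}
    (hmax : ∀ x y, twoPt u v δ a x y ≤ twoPt u v δ a x₀ x₀) :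
    v x₀ ^ 2 + u x₀ ^ 2 ≤ 2 * (2 / a + δ) ^ 2 + 2 * n * δ ^ 2 := by
  have h1 := twoPt_grad h hδ ha hmax
  have h2 := twoPt_grad h.swap hδ ha (x₀ := x₀) (y₀ := x₀)
    (fun x y => by
      rw [twoPt_swap (u := u) (v := v), twoPt_swap (u := u) (v := v)]; exact hmax y x)
  have e0 : 2 * (Real.exp (-(2 * δ * ‖x₀ - x₀‖)) / psi δ a ‖x₀ - x₀‖) + δ = 2 / a + δ := by
    simp [psi, div_eq_mul_inv]
  rw [e0] at h1 h2
  have := sum_second_order h (η := fun i => EuclideanSpace.single i 1) (B := fun _ => 2 * δ ^ 2)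
    rfl rfl h1 h2 (by
      intro i
      set ξ : Euc n := EuclideanSpace.single i 1 with hξ
      refine (second_order h (Filter.Eventually.of_forall fun t =>
        (hasDerivAt_qquad δ x₀ ξ t).fun_add (hasDerivAt_qquad δ x₀ ξ t))
        ((hasDerivAt_qquad_two δ x₀ ξ 0).fun_add (hasDerivAt_qquad_two δ x₀ ξ 0))
        (Filter.Eventually.of_forall fun t => ?_)).trans ?_
      · have hm := hmax (x₀ + t • ξ) (x₀ + t • ξ)
        have hq := qf_le_qquad δ x₀ ξ t
        simp only [twoPt, sub_self] at hm
        rw [qquad_zero]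
        linarith
      · have := qquad_second_le (δ := δ) x₀ ξ (by simp [hξ])
        linarith)
  simp only [Finset.sum_const, Finset.card_univ, Fintype.card_fin, nsmul_eq_mul] at this
  linarith

/-- Second order condition at an off-diagonal maximum, moving the second point by the reflection
of the motion of the first. The terms quadratic in the logarithmic derivative of `ψ` cancel, and
the concavity of `ψ` provides a term of good sign. -/
lemma twoPt_offdiag (h : IsSol u v C₀) {δ a : ℝ} (hδ : 0 < δ) (ha : 0 < a) {x₀ y₀ : Euc n}
    (hne : x₀ ≠ y₀) (hmax : ∀ x y, twoPt u v δ a x y ≤ twoPt u v δ a x₀ y₀) :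
    8 * Real.exp (-(2 * δ * ‖x₀ - y₀‖)) < 2 * (n + 1) * (δ * psi δ a ‖x₀ - y₀‖) := by
  have h1 := twoPt_grad h hδ ha hmax
  have h2 := twoPt_grad h.swap hδ ha (x₀ := y₀) (y₀ := x₀)
    (fun x y => by
      rw [twoPt_swap (u := u) (v := v), twoPt_swap (u := u) (v := v)]; exact hmax y x)
  rw [norm_sub_rev y₀ x₀] at h2
  set ρ := ‖x₀ - y₀‖ with hρ
  have hρ0 : 0 < ρ := norm_pos_iff.2 (sub_ne_zero.2 hne)
  have hψ : 0 < psi δ a ρ := ha.trans_le (le_psi hδ hρ0.le)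
  set e : Euc n := ρ⁻¹ • (x₀ - y₀) with he
  have he1 : ‖e‖ = 1 := by
    rw [he, norm_smul, norm_inv, Real.norm_eq_abs, abs_of_pos hρ0, ← hρ, inv_mul_cancel₀ hρ0.ne']
  have hxy : x₀ - y₀ = ρ • e := by rw [he, smul_smul, mul_inv_cancel₀ hρ0.ne', one_smul]
  set P := Real.exp (-(2 * δ * ρ)) / psi δ a ρ with hP
  have hP0 : 0 < P := by positivity
  set f₂ : ℝ := -(4 * δ * P) - 2 * P ^ 2 with hf₂
  have := sum_second_order h (η := rfv e)
    (B := fun i => (2 * e i) ^ 2 * f₂ + 2 * δ ^ 2)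
    (sum_hess_rfv h.hv he1 y₀) (sum_fderiv_rfv he1 y₀) h1 h2 (by
      intro i
      set ξ : Euc n := EuclideanSpace.single i 1 with hξ
      set τ : ℝ := 2 * e i with hτ
      have hl : ∀ t : ℝ, HasDerivAt (fun t : ℝ => ρ + t * τ) τ t := fun t => by
        simpa using ((hasDerivAt_id t).mul_const τ).const_add ρ
      have hpos : ∀ᶠ t in nhds (0 : ℝ), 0 < ρ + t * τ := by
        refine (hl 0).continuousAt.eventually_const_lt ?_
        simpa using hρ0
      have hd1 : ∀ᶠ t in nhds (0 : ℝ), HasDerivAt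
          (fun t => 2 * Real.log (psi δ a (ρ + t * τ)))
          (2 * (Real.exp (-(2 * δ * (ρ + t * τ))) / psi δ a (ρ + t * τ)) * τ) t := by
        filter_upwards [hpos] with t ht
        exact HasDerivAt.comp (h₂ := fun ρ => 2 * Real.log (psi δ a ρ)) t
          (hasDerivAt_log_psi hδ (ha.trans_le (le_psi hδ ht.le))) (hl t)
      have hd2 : HasDerivAt
          (fun t => 2 * (Real.exp (-(2 * δ * (ρ + t * τ))) / psi δ a (ρ + t * τ)) * τ)
          (f₂ * τ * τ) 0 := by
        have hl2 : HasDerivAt (fun ρ => 2 * (Real.exp (-(2 * δ * ρ)) / psi δ a ρ)) f₂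
            (ρ + 0 * τ) := by
          rw [zero_mul, add_zero]; exact hasDerivAt_log_psi_two hδ hψ
        exact (hl2.comp 0 (hl 0)).mul_const τ
      refine (second_order h (hd1.mono fun t ht => (ht.fun_add
        (hasDerivAt_qquad δ x₀ ξ t)).fun_add (hasDerivAt_qquad δ y₀ (rfv e i) t))
        ((hd2.fun_add (hasDerivAt_qquad_two δ x₀ ξ 0)).fun_add
          (hasDerivAt_qquad_two δ y₀ (rfv e i) 0)) ?_).trans ?_
      · filter_upwards [hpos] with t ht
        have hm := hmax (x₀ + t • ξ) (y₀ + t • rfv e i)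
        have hq1 := qf_le_qquad δ x₀ ξ t
        have hq2 := qf_le_qquad δ y₀ (rfv e i) t
        -- the reflected motion changes the distance at speed `2 ⟨ξ, e⟩` exactly
        have hdist : ‖x₀ + t • ξ - (y₀ + t • rfv e i)‖ = ρ + t * τ := by
          have e1 : x₀ + t • ξ - (y₀ + t • rfv e i) = (ρ + t * τ) • e := by
            have : x₀ + t • ξ - (y₀ + t • rfv e i) = (x₀ - y₀) + t • (ξ - rfv e i) := by
              rw [smul_sub]; abel
            rw [this, hxy, rfv, ← hξ, sub_sub_cancel, add_smul, ← hτ, smul_smul t τ e]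
          rw [e1, norm_smul, he1, mul_one, Real.norm_eq_abs, abs_of_pos ht]
        simp only [twoPt] at hm
        rw [hdist, ← hρ] at hm
        rw [qquad_zero, qquad_zero, zero_mul, add_zero]
        linarith
      · have hq1 := qquad_second_le (δ := δ) x₀ ξ (by simp [hξ])
        have hq2 := qquad_second_le (δ := δ) y₀ (rfv e i) (norm_rfv he1 i)
        have : f₂ * τ * τ = τ ^ 2 * f₂ := by ring
        linarith)
  have hsum : ∑ i, ((2 * e i) ^ 2 * f₂ + 2 * δ ^ 2) = 4 * f₂ + 2 * n * δ ^ 2 := by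
    rw [Finset.sum_add_distrib, ← Finset.sum_mul]
    simp only [mul_pow, ← Finset.mul_sum, ← norm_sq_eq_sum, he1, Finset.sum_const,
      Finset.card_univ, Fintype.card_fin, nsmul_eq_mul]
    ring
  rw [hsum] at this
  have hv := h.hvpos x₀
  have hu := h.hupos y₀
  have h3 : 0 < v x₀ ^ 2 + u y₀ ^ 2 := by positivity
  have h4 : 0 < δ * (2 * (n + 1) * δ - 8 * P) := by
    rw [hf₂] at this
    nlinarith
  have h5 : 8 * P < 2 * (n + 1) * δ := by
    have := pos_of_mul_pos_right h4 hδ.le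
    linarith
  have h6 : Real.exp (-(2 * δ * ρ)) = P * psi δ a ρ := by rw [hP]; field_simp
  rw [h6]
  nlinarith

/-- There is no positive solution of sublinear growth. -/
lemma liouville (h : IsSol u v C₀) (hsub : ∀ ε > 0, ∃ A, ∀ z, u z + v z ≤ A + ε * ‖z‖) :
    False := by
  have hu0 := h.hupos 0
  have hv0 := h.hvpos 0
  set k : ℝ := Real.sqrt (u 0 * v 0) with hk
  have hk0 : 0 < k := Real.sqrt_pos.2 (by positivity)
  have hk2 : k ^ 2 = u 0 * v 0 := Real.sq_sqrt (by positivity)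
  set a : ℝ := 4 / k with ha
  have ha0 : 0 < a := by positivity
  set C : ℝ := Real.exp 1 * a / k with hC
  have hC0 : 0 < C := by positivity
  set ε : ℝ := 1 / (8 * (n + 1) * C) with hε
  have hε0 : 0 < ε := by positivity
  obtain ⟨A, hA⟩ := hsub ε hε0
  have hA0 : 0 < A := by
    have := hA 0
    rw [norm_zero, mul_zero, add_zero] at this
    linarith
  set δ : ℝ := min (ε / A) (k / (4 * (n + 1))) with hδ
  have hδ0 : 0 < δ := lt_min (by positivity) (by positivity)
  have hδ1 : δ * A ≤ ε := by
    have := min_le_left (ε / A) (k / (4 * (n + 1)))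
    rw [← hδ, le_div_iff₀ hA0] at this
    exact this
  have hδ2 : δ * (4 * (n + 1)) ≤ k := by
    have := min_le_right (ε / A) (k / (4 * (n + 1)))
    rw [← hδ, le_div_iff₀ (by positivity)] at this
    exact this
  obtain ⟨x₀, y₀, hmax⟩ := exists_twoPt_max h hA0 hε0 hδ0 ha0 hA
  have h00 := hmax 0 0
  have e00 : twoPt u v δ a 0 0 = 2 * Real.log k - 2 * Real.log a - 2 := by
    have : Real.log (u 0) + Real.log (v 0) = 2 * Real.log k := by
      rw [← Real.log_mul hu0.ne' hv0.ne', ← hk2, Real.log_pow]; norm_num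
    simp only [twoPt, this]
    simp [psi, qf]
    ring
  rw [e00] at h00
  have hψ : 0 < psi δ a ‖x₀ - y₀‖ := ha0.trans_le (le_psi hδ0 (norm_nonneg _))
  have hn : (0 : ℝ) ≤ n := Nat.cast_nonneg n
  by_cases hxy : x₀ = y₀
  · subst hxy
    have h1 := twoPt_diag h hδ0 ha0 hmax
    have h2 : 2 * Real.log k ≤ Real.log (u x₀) + Real.log (v x₀) := by
      have hq := one_le_qf δ x₀
      have e1 : psi δ a ‖x₀ - x₀‖ = a := by simp [psi]
      simp only [twoPt, e1] at h00
      linarith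
    have hux := h.hupos x₀
    have hvx := h.hvpos x₀
    rw [← Real.log_mul hux.ne' hvx.ne', ← Nat.cast_ofNat (n := 2), ← Real.log_pow,
      Real.log_le_log_iff (by positivity) (by positivity)] at h2
    have h3 : 2 / a = k / 2 := by rw [ha]; field_simp; norm_num
    rw [h3] at h1
    have h4 : δ ≤ k / 4 := by nlinarith
    have h5 : 2 * n * δ ^ 2 ≤ k ^ 2 / 8 := by
      have : (δ * (4 * (n + 1))) ^ 2 ≤ k ^ 2 := by gcongr
      nlinarith [mul_nonneg hn hn, sq_nonneg δ, mul_nonneg (mul_nonneg hn hn) (sq_nonneg δ)]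
    have h6 : (k / 2 + δ) ^ 2 ≤ (k / 2 + k / 4) ^ 2 := by gcongr
    nlinarith [sq_nonneg (u x₀ - v x₀), sq_pos_of_pos hk0]
  · have h1 := twoPt_offdiag h hδ0 ha0 hxy hmax
    have h2 : psi δ a ‖x₀ - y₀‖ ≤ C * (A + ε / δ) := by
      have hx := log_sub_qf_le h.hupos hA0 hε0 hδ0 (fun z => by linarith [hA z, h.hvpos z]) x₀
      have hy := log_sub_qf_le h.hvpos hA0 hε0 hδ0 (fun z => by linarith [hA z, h.hupos z]) y₀
      have hq1 := one_le_qf δ x₀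
      have hq2 := one_le_qf δ y₀
      rw [← Real.log_le_log_iff hψ (by positivity), Real.log_mul (by positivity) (by positivity),
        hC, Real.log_div (by positivity) (by positivity), Real.log_mul (by positivity)
        (by positivity), Real.log_exp]
      simp only [twoPt] at h00
      linarith
    have h3 : δ * psi δ a ‖x₀ - y₀‖ ≤ 2 * C * ε := by
      calc δ * psi δ a ‖x₀ - y₀‖ ≤ δ * (C * (A + ε / δ)) := by gcongr
        _ = C * (δ * A + ε) := by field_simp
        _ ≤ C * (ε + ε) := by gcongr
        _ = _ := by ring
    have h4 : 2 * C * ε = 1 / (4 * (n + 1)) := by rw [hε]; field_simp; norm_num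
    rw [h4, le_div_iff₀ (by positivity)] at h3
    have h5 : Real.exp (-(2 * δ * ‖x₀ - y₀‖)) = 1 - 2 * δ * (psi δ a ‖x₀ - y₀‖ - a) := by
      rw [psi]; field_simp; ring
    rw [h5] at h1
    have h6 : 0 < δ * psi δ a ‖x₀ - y₀‖ := by positivity
    have h7 : 0 < δ * a := by positivity
    have h8 : 0 ≤ (n : ℝ) * (δ * psi δ a ‖x₀ - y₀‖) := by positivity
    nlinarith

end

/-! ### Linear growth from below -/

section
variable {n : ℕ} {u v : Euc n → ℝ} {C₀ : ℝ}

/-- If `a(0, r) / r²` were arbitrarily small, doubling would give sublinear growth. -/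
lemma IsSol.lower_zero (h : IsSol u v C₀) :
    ∃ c > 0, ∀ r : ℝ, 0 < r → c * r ^ 2 ≤ wint 2 (usq u v) 0 r := by
  by_contra! hc
  refine liouville h fun ε hε => ?_
  have hcs := csup_pos n
  obtain ⟨r₁, hr₁, hlt⟩ := hc (ε ^ 2 / (2 * csup n * Real.exp 1)) (by positivity)
  refine ⟨ε * r₁, fun z => ?_⟩
  set s := r₁ + ‖z‖ with hs
  have hs0 : r₁ ≤ s := by rw [hs]; linarith [norm_nonneg z]
  have hs1 : 0 < s := hr₁.trans_le hs0
  have h1 := h.sup_bound (x := 0) (z := z) hs1 (by rw [sub_zero, hs]; linarith)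
  have h2 := h.doubling 0 hr₁ hs0
  have h3 : wint 2 (usq u v) 0 r₁ / r₁ ^ 2 ≤ ε ^ 2 / (2 * csup n * Real.exp 1) := by
    rw [div_le_iff₀ (by positivity)]; exact hlt.le
  have h4 : wint 2 (usq u v) 0 s ≤ ε ^ 2 / (2 * csup n) * s ^ 2 := by
    rw [← div_le_iff₀ (by positivity)]
    refine h2.trans ((mul_le_mul_of_nonneg_left h3 (Real.exp_pos 1).le).trans (le_of_eq ?_))
    field_simp
  have h5 : (u z + v z) ^ 2 ≤ (ε * s) ^ 2 := by
    have h6 : (u z + v z) ^ 2 ≤ 2 * usq u v z := by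
      rw [usq]; nlinarith [sq_nonneg (u z - v z)]
    calc (u z + v z) ^ 2 ≤ 2 * (csup n * (ε ^ 2 / (2 * csup n) * s ^ 2)) :=
          h6.trans (by gcongr; exact h1.trans (by gcongr))
      _ = _ := by field_simp
  have := abs_le_of_sq_le_sq h5 (by positivity)
  have e : ε * s = ε * r₁ + ε * ‖z‖ := by rw [hs]; ring
  linarith [(abs_le.1 this).2]

lemma IsSol.lower (h : IsSol u v C₀) :
    ∃ c > 0, ∀ (x : Euc n) (r : ℝ), 0 < r → c * r ^ 2 ≤ wint 2 (usq u v) x r := by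
  obtain ⟨c, hc, hlow⟩ := h.lower_zero
  refine ⟨c / (32 * 4 ^ n * Real.exp 1), by positivity, fun x r hr => ?_⟩
  set R := max r (4 * ‖x‖) with hR
  have hrR : r ≤ R := le_max_left _ _
  have hxR : 4 * ‖x‖ ≤ R := le_max_right _ _
  have hR0 : 0 < R := hr.trans_le hrR
  have h1 := wint_compare h.smooth_usq.continuous (fun y => (h.usq_pos y).le) (x := x) (z := 0)
    (r := R / 4) (R := R) (by positivity) hR0 (by rw [zero_sub, norm_neg]; linarith)
  rw [show R / (R / 4) = 4 by field_simp] at h1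
  have h2 := hlow (R / 4) (by positivity)
  have h3 := h.doubling x hr hrR
  have h4 : c / (32 * 4 ^ n) ≤ wint 2 (usq u v) x R / R ^ 2 := by
    rw [div_le_div_iff₀ (by positivity) (by positivity)]
    nlinarith
  have h5 := h4.trans h3
  rw [← mul_div_assoc, le_div_iff₀ (by positivity)] at h5
  have e : c / (32 * 4 ^ n * Real.exp 1) * r ^ 2 = (c / (32 * 4 ^ n) * r ^ 2) / Real.exp 1 := by
    field_simp
  rw [e, div_le_iff₀ (Real.exp_pos 1)]
  linarith

/-! ### The subharmonic function `√(1 + u² + v²)` -/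

/-- `√(1 + u² + v²)`. -/
noncomputable def cone (u v : Euc n → ℝ) (z : Euc n) : ℝ := Real.sqrt (1 + usq u v z)

lemma IsSol.smooth_cone (h : IsSol u v C₀) : Smooth (cone u v) :=
  ContDiff.sqrt (contDiff_const.add h.smooth_usq) fun z => by
    have := h.usq_pos z
    positivity

lemma IsSol.cone_sq (h : IsSol u v C₀) (z : Euc n) : cone u v z ^ 2 = 1 + usq u v z :=
  Real.sq_sqrt (by have := h.usq_pos z; positivity)

lemma IsSol.one_le_cone (h : IsSol u v C₀) (z : Euc n) : 1 ≤ cone u v z :=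
  Real.one_le_sqrt.2 (by have := h.usq_pos z; linarith)

/-- The map `√(1 + s² + t²)` is strictly convex, so the Laplacian of `√(1 + u² + v²)` controls
the energy density wherever `u` and `v` are bounded. -/
lemma IsSol.lap_cone (h : IsSol u v C₀) (z : Euc n) :
    edens u v z + pot u v z ≤ cone u v z ^ 3 * lap (cone u v) z := by
  have hF := h.smooth_cone
  have hone := h.one_le_cone z
  have e1 : (fun z => cone u v z ^ 2) = fun z => 1 + usq u v z := funext h.cone_sq
  have h1 := lap_sq hF z
  rw [e1, lap_add contDiff_const h.smooth_usq, h.lap_usq] at h1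
  have e2 : lap (fun _ : Euc n => (1 : ℝ)) z = 0 := by simp [lap]
  rw [e2, zero_add] at h1
  have h2 : ∀ i, (cone u v z * pd i (cone u v) z) ^ 2
      ≤ usq u v z * (pd i u z ^ 2 + pd i v z ^ 2) := by
    intro i
    have h3 := pd_sq hF i z
    have e3 : usq u v = fun z => u z ^ 2 + v z ^ 2 := rfl
    rw [e1, pd_add contDiff_const h.smooth_usq, e3, pd_add (h.hu.pow 2) (h.hv.pow 2),
      pd_sq h.hu, pd_sq h.hv] at h3
    have e4 : pd i (fun _ : Euc n => (1 : ℝ)) z = 0 := by simp [pd]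
    have h4 : cone u v z * pd i (cone u v) z = u z * pd i u z + v z * pd i v z := by linarith
    rw [h4, usq]
    nlinarith [sq_nonneg (u z * pd i v z - v z * pd i u z)]
  have h5 : cone u v z ^ 2 * gsq (cone u v) z ≤ usq u v z * (gsq u z + gsq v z) := by
    have := Finset.sum_le_sum fun i (_ : i ∈ Finset.univ) => h2 i
    simp only [mul_pow] at this
    rw [← Finset.mul_sum, ← Finset.mul_sum, Finset.sum_add_distrib] at this
    exact this
  have h6 : gsq (cone u v) z = ∑ i, pd i (cone u v) z ^ 2 := rfl
  rw [← h6] at h1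
  have h7 : cone u v z ^ 3 * lap (cone u v) z
      = cone u v z ^ 2 * (edens u v z + pot u v z) - cone u v z ^ 2 * gsq (cone u v) z := by
    have : cone u v z * lap (cone u v) z = edens u v z + pot u v z - gsq (cone u v) z := by
      linarith
    calc _ = cone u v z ^ 2 * (cone u v z * lap (cone u v) z) := by ring
      _ = _ := by rw [this]; ring
  rw [h7, h.cone_sq]
  rw [h.cone_sq] at h5
  have h8 := h.usq_pos z
  have h9 := pot_nonneg (u := u) (v := v) z
  have e5 : edens u v z = gsq u z + gsq v z + pot u v z := rfl
  rw [e5]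
  nlinarith [mul_nonneg h8.le h9]

lemma IsSol.lap_cone_nonneg (h : IsSol u v C₀) (z : Euc n) : 0 ≤ lap (cone u v) z := by
  have h1 := h.lap_cone z
  have h2 := h.one_le_cone z
  have h3 := edens_nonneg (u := u) (v := v) z
  have h4 := pot_nonneg (u := u) (v := v) z
  exact nonneg_of_mul_nonneg_right (by linarith) (by positivity : 0 < cone u v z ^ 3)

/-! ### Integrals over balls -/

lemma wint_scale {k : ℕ} (f : Euc n → ℝ) (x : Euc n) {r : ℝ} (hr : 0 < r) :
    r ^ n * wint k f x r = ∫ z, f z * wt (r⁻¹ • (z - x)) ^ k := by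
  have e2 := Measure.integral_comp_smul (volume : Measure (Euc n))
    (fun z => f (x + z) * wt (r⁻¹ • z) ^ k) r
  have e3 : ∀ y : Euc n, r⁻¹ • r • y = y := fun y => inv_smul_smul₀ hr.ne' y
  simp only [e3] at e2
  rw [wint, e2, finrank_euclideanSpace_fin, abs_of_pos (by positivity), smul_eq_mul, ← mul_assoc,
    mul_inv_cancel₀ (by positivity), one_mul,
    ← integral_add_left_eq_self (fun z => f z * wt (r⁻¹ • (z - x)) ^ k) x]
  simp

lemma integrable_scale {k : ℕ} (hk : k ≠ 0) {f : Euc n → ℝ} (hf : Continuous f) (x : Euc n)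
    {r : ℝ} (hr : 0 < r) : Integrable fun z => f z * wt (r⁻¹ • (z - x)) ^ k := by
  have hc : Continuous fun z : Euc n => f z * wt (r⁻¹ • (z - x)) ^ k :=
    hf.mul ((wt_cont.comp (by fun_prop)).pow k)
  refine hc.integrable_of_hasCompactSupport (HasCompactSupport.intro
    (isCompact_closedBall x r) fun z hz => ?_)
  rw [mem_closedBall, dist_eq_norm, not_le] at hz
  rw [wt_eq_zero, zero_pow hk, mul_zero]
  rw [norm_smul, norm_inv, Real.norm_of_nonneg hr.le, inv_mul_eq_div, one_le_div hr]
  exact hz.le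

lemma integrableOn_ball_of_cont {f : Euc n → ℝ} (hf : Continuous f) (x : Euc n) (r : ℝ) :
    IntegrableOn f (ball x r) :=
  (hf.continuousOn.integrableOn_compact (isCompact_closedBall x r)).mono_set ball_subset_closedBall

lemma wint_le_ball {k : ℕ} (hk : k ≠ 0) {f : Euc n → ℝ} (hf : Continuous f) (hpos : ∀ z, 0 ≤ f z)
    (x : Euc n) {r R : ℝ} (hr : 0 < r) (hrR : r ≤ R) :
    r ^ n * wint k f x r ≤ ∫ z in ball x R, f z := by
  rw [wint_scale f x hr, ← integral_indicator measurableSet_ball]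
  refine integral_mono (integrable_scale hk hf x hr)
    ((integrableOn_ball_of_cont hf x R).integrable_indicator measurableSet_ball) fun z => ?_
  by_cases hz : z ∈ ball x R
  · rw [indicator_of_mem hz]
    exact mul_le_of_le_one_right (hpos z) (pow_le_one₀ (wt_nonneg _) (wt_le_one _))
  · rw [indicator_of_notMem hz, wt_eq_zero, zero_pow hk, mul_zero]
    rw [mem_ball, dist_eq_norm, not_lt] at hz
    rw [norm_smul, norm_inv, Real.norm_of_nonneg hr.le, inv_mul_eq_div, one_le_div hr]
    linarith

lemma ball_le_wint {f : Euc n → ℝ} (hf : Continuous f) (hpos : ∀ z, 0 ≤ f z)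
    (x : Euc n) {r R : ℝ} (hr : 0 < r) (hrR : 2 * r ≤ R) :
    ∫ z in ball x r, f z ≤ 3 * (R ^ n * wint 3 f x R) := by
  have hR : 0 < R := by linarith
  rw [wint_scale f x hR, ← integral_indicator measurableSet_ball, ← integral_const_mul]
  refine integral_mono ((integrableOn_ball_of_cont hf x r).integrable_indicator
    measurableSet_ball) ((integrable_scale (by norm_num) hf x hR).const_mul 3) fun z => ?_
  by_cases hz : z ∈ ball x r
  · rw [indicator_of_mem hz]
    rw [mem_ball, dist_eq_norm] at hz
    have h1 : ‖R⁻¹ • (z - x)‖ ≤ 1 / 2 := by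
      rw [norm_smul, norm_inv, Real.norm_of_nonneg hR.le, inv_mul_eq_div, div_le_iff₀ hR]
      linarith
    have hw : 3 / 4 ≤ wt (R⁻¹ • (z - x)) :=
      le_max_of_le_left (by nlinarith [norm_nonneg (R⁻¹ • (z - x))])
    have h2 : (3 / 4 : ℝ) ^ 3 ≤ wt (R⁻¹ • (z - x)) ^ 3 := by gcongr
    norm_num at h2
    simp only
    nlinarith [hpos z]
  · rw [indicator_of_notMem hz]
    have := wt_nonneg (R⁻¹ • (z - x))
    have := hpos z
    simp only
    positivity

/-! ### Laplacian mass near transition points -/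

/-- The height grows from at most `Q` at radius `1` to at least `Q + 1` at radius `ρ`, so its
derivative, an integral of the energy density, is not small at some intermediate radius. -/
lemma IsSol.mass_lower (h : IsSol u v C₀) (T : ℝ) :
    ∃ ρ > 1, ∃ c > 0, ∀ x, u x ≤ T → v x ≤ T → c ≤ ∫ z in ball x ρ, lap (cone u v) z := by
  obtain ⟨Q, hQ, hup⟩ := h.transition_upper T
  obtain ⟨c₀, hc₀, hlow⟩ := h.lower
  have hcs := csup_pos n
  set ρ : ℝ := 1 + (Q + 1) / c₀ with hρ
  have hρ1 : 1 < ρ := by rw [hρ]; linarith [show 0 < (Q + 1) / c₀ by positivity]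
  have hρ2 : Q + 1 ≤ c₀ * ρ ^ 2 := by
    have : Q + 1 ≤ c₀ * ρ := by
      rw [hρ, mul_add, mul_div_cancel₀ _ hc₀.ne']; linarith
    nlinarith
  set S : ℝ := 1 + csup n * (Real.exp 1 * Q * ρ ^ 2) with hS
  have hS0 : 0 < S := by positivity
  refine ⟨ρ, hρ1, 3 / (ρ ^ 2 * S ^ 2), by positivity, fun x hux hvx => ?_⟩
  have ha1 := hup x hux hvx
  have haρ := hlow x ρ (by linarith)
  obtain ⟨ξ, hξ, hder⟩ := exists_hasDerivAt_eq_slope (wint 2 (usq u v) x)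
    (fun r => r / 3 * (wint 3 (edens u v) x r + wint 3 (pot u v) x r)) hρ1
    (fun r _ => (h.hasDerivAt_height x r).continuousAt.continuousWithinAt)
    (fun r _ => h.hasDerivAt_height x r)
  have hξ0 : 0 < ξ := by linarith [hξ.1]
  set dp := wint 3 (edens u v) x ξ + wint 3 (pot u v) x ξ with hdp
  have h1 : 3 / ρ ^ 2 ≤ dp := by
    rw [eq_div_iff (by linarith)] at hder
    have h2 : 1 ≤ ξ / 3 * dp * (ρ - 1) := by linarith
    have h3 : 0 ≤ dp := add_nonneg (wint_nonneg edens_nonneg x ξ) (wint_nonneg pot_nonneg x ξ)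
    rw [div_le_iff₀ (by positivity)]
    have h4 : ξ / 3 * dp * (ρ - 1) ≤ ρ / 3 * dp * ρ := by
      gcongr
      · exact hξ.2.le
      · linarith
    nlinarith
  have hbd : ∀ z, ‖z - x‖ ≤ ρ → usq u v z ≤ csup n * (Real.exp 1 * Q * ρ ^ 2) := by
    intro z hz
    refine (h.sup_bound (by linarith) hz).trans ?_
    gcongr
    have := h.doubling x one_pos hρ1.le
    rw [div_le_iff₀ (by positivity)] at this
    refine this.trans ?_
    gcongr
    simpa using ha1
  have h5 : S⁻¹ ^ 2 * dp ≤ wint 3 (lap (cone u v)) x ξ := by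
    rw [hdp, ← wint_add (by norm_num) h.smooth_edens.continuous h.smooth_pot.continuous,
      ← wint_const_mul]
    refine wint_mono (f := fun z => S⁻¹ ^ 2 * (edens u v z + pot u v z)) (by norm_num)
      (continuous_const.mul
      (h.smooth_edens.continuous.add h.smooth_pot.continuous)) h.smooth_cone.lap.continuous x
      hξ0.le fun z hz => ?_
    have h6 := h.lap_cone z
    have h7 := h.lap_cone_nonneg z
    have h8 := h.one_le_cone z
    have h9 : cone u v z ^ 2 ≤ S := by
      rw [h.cone_sq, hS]; linarith [hbd z (hz.trans hξ.2.le)]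
    have h10 : cone u v z ^ 3 ≤ S ^ 2 := by
      calc cone u v z ^ 3 ≤ cone u v z ^ 4 := pow_le_pow_right₀ h8 (by norm_num)
        _ = (cone u v z ^ 2) ^ 2 := by ring
        _ ≤ S ^ 2 := by gcongr
    rw [inv_pow, inv_mul_le_iff₀ (by positivity)]
    exact h6.trans (mul_le_mul_of_nonneg_right h10 h7)
  refine le_trans ?_ (wint_le_ball (k := 3) (by norm_num) h.smooth_cone.lap.continuous
    h.lap_cone_nonneg x hξ0 hξ.2.le)
  have h11 : 3 / (ρ ^ 2 * S ^ 2) ≤ wint 3 (lap (cone u v)) x ξ := by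
    refine le_trans ?_ h5
    calc 3 / (ρ ^ 2 * S ^ 2) = S⁻¹ ^ 2 * (3 / ρ ^ 2) := by field_simp
      _ ≤ _ := by gcongr
  refine h11.trans (le_mul_of_one_le_left ?_ (one_le_pow₀ hξ.1.le))
  exact le_trans (by positivity) h11

/-- The average of `F = √(1 + u² + v²)` is at most `C r` at radius `4 r`, and its derivative is a
weighted integral of `ΔF`, so that integral is controlled at some radius between `2 r` and `4 r`. -/
lemma IsSol.mass_upper (h : IsSol u v C₀) (hn : 1 ≤ n) (T : ℝ) :
    ∃ C > 0, ∀ x, u x ≤ T → v x ≤ T → ∀ r : ℝ, 1 ≤ r →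
      ∫ z in ball x r, lap (cone u v) z ≤ C * r ^ (n - 1) := by
  obtain ⟨Q, hQ, hup⟩ := h.transition_upper T
  have hcs := csup_pos n
  have hcw := cw_pos n
  set S : ℝ := 1 + csup n * (Real.exp 1 * Q * 16) with hS
  have hS1 : 1 ≤ S := by rw [hS]; linarith [show 0 < csup n * (Real.exp 1 * Q * 16) by positivity]
  have hS0 : 0 < S := by linarith
  refine ⟨9 * S * cw n * 4 ^ (n - 1), by positivity, fun x hux hvx r hr => ?_⟩
  have hr0 : 0 < r := by linarith
  have hF := h.smooth_cone
  have hbd : ∀ z, ‖z - x‖ ≤ 4 * r → cone u v z ≤ S * r := by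
    intro z hz
    have h1 : usq u v z ≤ csup n * (Real.exp 1 * Q * 16) * r ^ 2 := by
      refine (h.sup_bound (by positivity) hz).trans ?_
      rw [mul_assoc]
      gcongr
      have := h.doubling x one_pos (by linarith : 1 ≤ 4 * r)
      rw [div_le_iff₀ (by positivity)] at this
      refine this.trans ?_
      calc _ = Real.exp 1 * wint 2 (usq u v) x 1 * 16 * r ^ 2 := by ring
        _ ≤ _ := by gcongr; exact hup x hux hvx
    have h2 : cone u v z ^ 2 ≤ (S * r) ^ 2 := by
      rw [h.cone_sq]
      have : 1 + usq u v z ≤ S * r ^ 2 := by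
        rw [hS]; nlinarith
      nlinarith [sq_nonneg r, mul_nonneg (sub_nonneg.2 hS1) (mul_nonneg hS0.le (sq_nonneg r))]
    exact (abs_le.1 (abs_le_of_sq_le_sq h2 (by positivity))).2
  obtain ⟨ξ, hξ, hder⟩ := exists_hasDerivAt_eq_slope (wint 2 (cone u v) x)
    (fun r => r / 6 * wint 3 (lap (cone u v)) x r) (by linarith : 2 * r < 4 * r)
    (fun r _ => (hasDerivAt_wint_two hF x r).continuousAt.continuousWithinAt)
    (fun r _ => hasDerivAt_wint_two hF x r)
  have hξ0 : 0 < ξ := by linarith [hξ.1]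
  have h1 : wint 2 (cone u v) x (4 * r) ≤ S * r * cw n := by
    rw [← wint_const _ x (4 * r)]
    exact wint_mono (by norm_num) hF.continuous continuous_const x (by positivity) hbd
  have h2 : 0 ≤ wint 2 (cone u v) x (2 * r) :=
    wint_nonneg (fun z => by linarith [h.one_le_cone z]) x _
  have h3 : ξ * wint 3 (lap (cone u v)) x ξ ≤ 3 * S * cw n := by
    rw [eq_div_iff (by linarith)] at hder
    have : ξ * wint 3 (lap (cone u v)) x ξ * r ≤ 3 * S * cw n * r := by nlinarith
    exact le_of_mul_le_mul_right this hr0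
  refine (ball_le_wint hF.lap.continuous h.lap_cone_nonneg x hr0 hξ.1.le).trans ?_
  obtain ⟨m, rfl⟩ : ∃ m, n = m + 1 := ⟨n - 1, by omega⟩
  rw [Nat.add_sub_cancel]
  have h4 : ξ ^ m ≤ (4 * r) ^ m := pow_le_pow_left₀ hξ0.le hξ.2.le m
  calc 3 * (ξ ^ (m + 1) * wint 3 (lap (cone u v)) x ξ)
      = 3 * (ξ ^ m * (ξ * wint 3 (lap (cone u v)) x ξ)) := by ring
    _ ≤ 3 * ((4 * r) ^ m * (3 * S * cw (m + 1))) := by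
      have h5 := mul_nonneg hξ0.le (wint_nonneg (k := 3) h.lap_cone_nonneg x ξ)
      exact mul_le_mul_of_nonneg_left (mul_le_mul h4 h3 h5 (by positivity)) (by norm_num)
    _ = _ := by rw [mul_pow]; ring

end

/-! ### Double counting -/

/-- Double counting: if a nonnegative density `g` has mass at least `c` in the `ρ`-ball around each
point of `A ⊆ B_R(x)`, then `c · |A| ≤ |B_ρ| · ∫_{B_{R+ρ}(x)} g`. -/
lemma measure_le_of_mass {n : ℕ} {g : Euc n → ℝ≥0∞} (hg : Measurable g) {A : Set (Euc n)}
    (hA : MeasurableSet A) {x : Euc n} {R ρ : ℝ} (hAR : A ⊆ ball x R) {c : ℝ≥0∞}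
    (hc : ∀ y ∈ A, c ≤ ∫⁻ z in ball y ρ, g z) :
    c * volume A ≤ volume (ball (0 : Euc n) ρ) * ∫⁻ z in ball x (R + ρ), g z := by
  have hm : MeasurableSet {p : Euc n × Euc n | dist p.2 p.1 < ρ} :=
    measurableSet_lt (by fun_prop) measurable_const
  have hm2 : Measurable (fun p : Euc n × Euc n =>
      {p : Euc n × Euc n | dist p.2 p.1 < ρ}.indicator (fun p => g p.2) p) :=
    (hg.comp measurable_snd).indicator hm
  calc c * volume A = ∫⁻ _ in A, c := by rw [setLIntegral_const]
    _ ≤ ∫⁻ y in A, ∫⁻ z in ball y ρ, g z := setLIntegral_mono' hA hc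
    _ = ∫⁻ y in A, ∫⁻ z,
          {p : Euc n × Euc n | dist p.2 p.1 < ρ}.indicator (fun p => g p.2) (y, z) := by
        congr 1; ext y
        rw [← lintegral_indicator measurableSet_ball]
        rfl
    _ = ∫⁻ z, ∫⁻ y in A,
          {p : Euc n × Euc n | dist p.2 p.1 < ρ}.indicator (fun p => g p.2) (y, z) :=
        lintegral_lintegral_swap hm2.aemeasurable
    _ ≤ ∫⁻ z, (ball x (R + ρ)).indicator
          (fun z => volume (ball (0 : Euc n) ρ) * g z) z := by
        refine lintegral_mono fun z => ?_
        by_cases hz : z ∈ ball x (R + ρ)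
        · rw [indicator_of_mem hz]
          calc _ ≤ ∫⁻ y, (ball z ρ).indicator (fun _ => g z) y := by
                refine (setLIntegral_le_lintegral _ _).trans (lintegral_mono fun y => ?_)
                by_cases hy : dist z y < ρ
                · rw [indicator_of_mem (by exact hy), indicator_of_mem (by rwa [mem_ball'])]
                · rw [indicator_of_notMem (by exact hy)]; exact zero_le
            _ = volume (ball (0 : Euc n) ρ) * g z := by
                rw [lintegral_indicator measurableSet_ball, setLIntegral_const, mul_comm,
                  Measure.addHaar_ball_center]
        · rw [indicator_of_notMem hz]
          refine le_of_eq ?_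
          rw [setLIntegral_eq_zero_iff' hA] 
          · refine Filter.Eventually.of_forall fun y hy => indicator_of_notMem (fun hd => hz ?_) _
            have h1 : dist y x < R := hAR hy
            have h2 : dist z y < ρ := hd
            exact mem_ball.2 ((dist_triangle z y x).trans_lt (by linarith))
          · exact (hm2.comp (measurable_prodMk_right (y := z))).aemeasurable
    _ = _ := by
        rw [lintegral_indicator measurableSet_ball, lintegral_const_mul _ hg]

theorem transition_region_measure (n : ℕ) (hn : 2 ≤ n)
    (u v : Euc n → ℝ)
    (hu : ContDiff ℝ (⊤ : ℕ∞) u) (hv : ContDiff ℝ (⊤ : ℕ∞) v)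
    (hupos : ∀ x, 0 < u x) (hvpos : ∀ x, 0 < v x)
    (hequ : ∀ x, lap u x = u x * v x ^ 2)
    (heqv : ∀ x, lap v x = v x * u x ^ 2)
    (C₀ : ℝ) (hC₀ : 0 < C₀)
    (hgrowth : ∀ x, u x + v x ≤ C₀ * (1 + ‖x‖)) :
    ∀ T > (1 : ℝ), ∃ C > (0 : ℝ), ∀ R > (1 : ℝ), ∀ x : Euc n,
      volume (ball x R ∩ {y | u y ≤ T ∧ v y ≤ T})
        ≤ ENNReal.ofReal (C * R ^ ((n : ℝ) - 1)) := by
  intro T _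
  have h : IsSol u v C₀ := ⟨hu, hv, hupos, hvpos, hequ, heqv, hC₀, hgrowth⟩
  obtain ⟨ρ, hρ, c, hc, hlow⟩ := h.mass_lower T
  obtain ⟨C, hC, hupp⟩ := h.mass_upper (by omega) T
  have hcont : Continuous (lap (cone u v)) := h.smooth_cone.lap.continuous
  have hconv : ∀ x r, ∫⁻ z in ball x r, ENNReal.ofReal (lap (cone u v) z)
      = ENNReal.ofReal (∫ z in ball x r, lap (cone u v) z) := fun x r =>
    (ofReal_integral_eq_lintegral_ofReal (integrableOn_ball_of_cont hcont x r)
      (Filter.Eventually.of_forall h.lap_cone_nonneg)).symm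
  set V := (volume (ball (0 : Euc n) ρ)).toReal with hV
  have hVtop : volume (ball (0 : Euc n) ρ) ≠ ⊤ := measure_ball_lt_top.ne
  have hV0 : 0 < V :=
    ENNReal.toReal_pos (measure_ball_pos volume _ (by linarith)).ne' hVtop
  refine ⟨V * (C * (2 + ρ) ^ (n - 1)) / c, by positivity, fun R hR x => ?_⟩
  have hexp : R ^ ((n : ℝ) - 1) = R ^ (n - 1) := by
    rw [← Real.rpow_natCast, Nat.cast_sub (by omega), Nat.cast_one]
  rw [hexp]
  set A := ball x R ∩ {y | u y ≤ T ∧ v y ≤ T} with hA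
  have hAm : MeasurableSet A := measurableSet_ball.inter
    ((isClosed_le hu.continuous continuous_const).inter
      (isClosed_le hv.continuous continuous_const)).measurableSet
  rcases A.eq_empty_or_nonempty with h0 | ⟨x', hx'⟩
  · rw [h0, measure_empty]; exact zero_le
  have h1 := measure_le_of_mass (g := fun z => ENNReal.ofReal (lap (cone u v) z))
    (ENNReal.measurable_ofReal.comp hcont.measurable) hAm (x := x) (R := R) (ρ := ρ)
    inter_subset_left (c := ENNReal.ofReal c) (fun y hy => by
      rw [hconv]; exact ENNReal.ofReal_le_ofReal (hlow y hy.2.1 hy.2.2))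
  have hsub : ball x (R + ρ) ⊆ ball x' (2 * R + ρ) := by
    refine ball_subset_ball' ?_
    have : dist x' x < R := hx'.1
    rw [dist_comm] at this
    linarith
  have h2 : ∫⁻ z in ball x (R + ρ), ENNReal.ofReal (lap (cone u v) z)
      ≤ ENNReal.ofReal (C * (2 + ρ) ^ (n - 1) * R ^ (n - 1)) := by
    refine (lintegral_mono_set hsub).trans ?_
    rw [hconv]
    refine ENNReal.ofReal_le_ofReal ((hupp x' hx'.2.1 hx'.2.2 _ (by linarith)).trans ?_)
    rw [mul_assoc, ← mul_pow]
    gcongr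
    nlinarith
  have h3 : volume A ≤ ENNReal.ofReal (V * (C * (2 + ρ) ^ (n - 1) * R ^ (n - 1)))
      / ENNReal.ofReal c := by
    rw [ENNReal.le_div_iff_mul_le (Or.inl (ENNReal.ofReal_pos.2 hc).ne')
      (Or.inl ENNReal.ofReal_ne_top), mul_comm, ENNReal.ofReal_mul hV0.le, hV,
      ENNReal.ofReal_toReal hVtop]
    exact h1.trans (by gcongr)
  rw [← ENNReal.ofReal_div_of_pos hc] at h3
  refine h3.trans (le_of_eq ?_)
  congr 1
  ring
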